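/- arXiv:1507.03627 — 7 statements merged into one kernel-verified Lean document; each statement's English description precedes it below -/
import Mathlib

section
/- Let a ∈ (0,1] and let θ ∈ C¹((0,∞)) with r ↦ r θ'(r) bounded on (0,∞) and θ' not identically zero. Then there exists R₀ > 0 such that for all R ≥ R₀ one has λ(R,θ') > 0, where λ(R,θ') is the infimum, over all ψ ∈ C¹_c(U) whose restriction to U_R := (0,R) × (0,2πa) is not identically zero, of the quotient (∫_{U_R} [ |∂_rψ − θ'(r)∂_φψ|² + |∂_φψ|²/r² − (1/(4a²)) |ψ|²/r² ] r dr dφ) / (∫_{U_R} |ψ|² r dr dφ). -/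
open MeasureTheory Real Set

noncomputable section

/-- The half-strip `U = (0,∞) × (0,2πa)` of curvilinear coordinates `(r,φ)`. -/
def wedgeU (a : ℝ) : Set (ℝ × ℝ) := Ioi (0:ℝ) ×ˢ Ioo (0:ℝ) (2 * π * a)

/-- The truncated half-strip `U_R = (0,R) × (0,2πa)`. -/
def wedgeUR (a R : ℝ) : Set (ℝ × ℝ) := Ioo (0:ℝ) R ×ˢ Ioo (0:ℝ) (2 * π * a)

/-- The lowest "Neumann" eigenvalue `λ(R,θ')`: the infimum over test functions
`ψ ∈ C¹_c(U)`, not identically zero on `U_R`, of the Hardy-type Rayleigh quotient on `U_R`. -/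
def lamRayleigh (a R : ℝ) (θ' : ℝ → ℝ) : ℝ :=
  sInf { q : ℝ | ∃ ψ : ℝ × ℝ → ℝ,
    ContDiff ℝ 1 ψ ∧ HasCompactSupport ψ ∧ tsupport ψ ⊆ wedgeU a ∧
    (¬ ∀ p ∈ wedgeUR a R, ψ p = 0) ∧
    q = (∫ p in wedgeUR a R,
          ((fderiv ℝ ψ p (1, 0) - θ' p.1 * fderiv ℝ ψ p (0, 1)) ^ 2
            + (fderiv ℝ ψ p (0, 1)) ^ 2 / p.1 ^ 2
            - (1 / (4 * a ^ 2)) * (ψ p) ^ 2 / p.1 ^ 2) * p.1)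
        / (∫ p in wedgeUR a R, (ψ p) ^ 2 * p.1) }

/-!
Let `κ(φ) = cot(φ/2a)/(2a)` be the logarithmic derivative of the angular Dirichlet ground state. The
Riccati equation for `κ` turns the numerator `Q(ψ)` of the Rayleigh quotient into
`N(ψ) = ∫ (x² r + y²/r)` with `x = ∂_rψ - f ∂_φψ`, `y = ∂_φψ - κψ` and `f = θ'`, so `Q ≥ 0`. It
remains to bound `∫ ψ² r` by a multiple of `N`.

The twist breaks criticality locally: if `x` and `y` vanish, then `∂_rψ = f κψ`, and the null
Lagrangian `∂_r(w κψ²) - ½ w' ∂_φ(ψ²)` becomes `2 w f κ²ψ²`. With a cutoff `w = η²` supported where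
`f` has a sign this bounds `∫ η²κ²ψ²`, hence, by the Riccati equation again, `∫ η²ψ²` by a multiple
of `N`. A Poincaré inequality along the twisted radial direction, from the null Lagrangian
`∂_r(gψ²) - g f ∂_φ(ψ²)` with `g' = r - c η²` and `g(0) = g(R) = 0`, carries this bound to all of
`(0,R)`.
-/

open scoped Topology ContDiff

/-- `F` is a real-valued test function of class `C^n` on `U`: it is `C^n` on the whole space and its
support is a compact subset of `U`. Mathlib's bundled `TestFunction` is the same notion, whereas
`lamRayleigh` uses plain functions. -/
structure IsTestFunction {E : Type*} [NormedAddCommGroup E] [NormedSpace ℝ E] (n : ℕ∞ω)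
    (U : Set E) (F : E → ℝ) : Prop where
  contDiff : ContDiff ℝ n F
  hasCompactSupport : HasCompactSupport F
  tsupport_subset : tsupport F ⊆ U

namespace IsTestFunction

variable {E : Type*} [NormedAddCommGroup E] [NormedSpace ℝ E] {m n : ℕ∞ω} {U V : Set E}
  {F G g : E → ℝ}

lemma eq_zero_of_notMem (hF : IsTestFunction n U F) {p : E} (hp : p ∉ U) : F p = 0 :=
  image_eq_zero_of_notMem_tsupport fun h => hp (hF.tsupport_subset h)

lemma mono (hF : IsTestFunction n U F) (hUV : U ⊆ V) : IsTestFunction n V F :=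
  ⟨hF.contDiff, hF.hasCompactSupport, hF.tsupport_subset.trans hUV⟩

lemma of_le (hF : IsTestFunction n U F) (hmn : m ≤ n) : IsTestFunction m U F :=
  ⟨hF.contDiff.of_le hmn, hF.hasCompactSupport, hF.tsupport_subset⟩

lemma mul_left (hF : IsTestFunction n U F) (hU : IsOpen U) (hg : ContDiffOn ℝ n g U) :
    IsTestFunction n U (fun p => g p * F p) where
  contDiff := by
    rw [contDiff_iff_contDiffAt]
    intro p
    by_cases hp : p ∈ tsupport F
    · exact (hg.contDiffAt (hU.mem_nhds (hF.tsupport_subset hp))).mul hF.contDiff.contDiffAt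
    · have hzero : (fun q => g q * F q) =ᶠ[𝓝 p] fun _ => 0 := by
        filter_upwards [notMem_tsupport_iff_eventuallyEq.1 hp] with q hq
        simp [hq]
      exact contDiffAt_const.congr_of_eventuallyEq hzero
  hasCompactSupport := hF.hasCompactSupport.mul_left
  tsupport_subset := tsupport_mul_subset_right.trans hF.tsupport_subset

lemma mul (hF : IsTestFunction n U F) (hG : IsTestFunction n U G) :
    IsTestFunction n U (fun p => F p * G p) :=
  ⟨hF.contDiff.mul hG.contDiff, hG.hasCompactSupport.mul_left,
    tsupport_mul_subset_right.trans hG.tsupport_subset⟩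

lemma sq (hF : IsTestFunction n U F) : IsTestFunction n U (fun p => F p ^ 2) := by
  simpa only [pow_two] using hF.mul hF

lemma const_mul (hF : IsTestFunction n U F) (c : ℝ) : IsTestFunction n U (fun p => c * F p) :=
  ⟨contDiff_const.mul hF.contDiff, hF.hasCompactSupport.mul_left,
    tsupport_mul_subset_right.trans hF.tsupport_subset⟩

lemma add (hF : IsTestFunction n U F) (hG : IsTestFunction n U G) :
    IsTestFunction n U (fun p => F p + G p) :=
  ⟨hF.contDiff.add hG.contDiff, hF.hasCompactSupport.add hG.hasCompactSupport,
    (tsupport_add F G).trans (union_subset hF.tsupport_subset hG.tsupport_subset)⟩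

lemma sub (hF : IsTestFunction n U F) (hG : IsTestFunction n U G) :
    IsTestFunction n U (fun p => F p - G p) := by
  simpa only [neg_one_mul, ← sub_eq_add_neg] using hF.add (hG.const_mul (-1))

lemma fderiv_apply (hF : IsTestFunction 1 U F) (v : E) :
    IsTestFunction 0 U (fun p => fderiv ℝ F p v) where
  contDiff := contDiff_zero.2 ((hF.contDiff.continuous_fderiv one_ne_zero).clm_apply
    continuous_const)
  hasCompactSupport := hF.hasCompactSupport.fderiv_apply ℝ v
  tsupport_subset := (tsupport_fderiv_apply_subset ℝ v).trans hF.tsupport_subset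

lemma integrable [MeasurableSpace E] [OpensMeasurableSpace E] {μ : Measure E}
    [IsFiniteMeasureOnCompacts μ] (hF : IsTestFunction n U F) : Integrable F μ :=
  hF.contDiff.continuous.integrable_of_hasCompactSupport hF.hasCompactSupport

lemma exists_abs_le (hF : IsTestFunction n U F) : ∃ C, ∀ p, |F p| ≤ C :=
  hF.hasCompactSupport.exists_bound_of_continuous hF.contDiff.continuous

end IsTestFunction

lemma exists_isTestFunction_one_apply_eq_one {E : Type*} [NormedAddCommGroup E] [NormedSpace ℝ E]
    [FiniteDimensional ℝ E] {s : Set E} {x : E} (hs : s ∈ 𝓝 x) :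
    ∃ F, IsTestFunction 1 s F ∧ F x = 1 := by
  obtain ⟨F, hFs, hFc, hF, -, hFx⟩ := exists_contDiff_tsupport_subset (n := 1) hs
  exact ⟨F, ⟨hF, hFc, hFs⟩, hFx⟩

lemma exists_quadratic_le_of_isTestFunction {m₁ m₂ : ℝ → ℝ} (h₁ : IsTestFunction 0 (Ioi 0) m₁)
    (h₂ : IsTestFunction 0 (Ioi 0) m₂) :
    ∃ C, ∀ r > 0, ∀ x y, m₁ r * x ^ 2 + m₂ r * y ^ 2 ≤ C * (x ^ 2 * r + y ^ 2 / r) := by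
  have hinv : ContDiffOn ℝ 0 (fun r : ℝ => r⁻¹) (Ioi 0) :=
    contDiffOn_id.inv fun r hr => ne_of_gt hr
  obtain ⟨C₁, hC₁⟩ := (h₁.mul_left isOpen_Ioi hinv).exists_abs_le
  obtain ⟨C₂, hC₂⟩ := (h₂.mul_left isOpen_Ioi contDiffOn_id).exists_abs_le
  refine ⟨max C₁ C₂, fun r hr x y => ?_⟩
  have hm₁ : r⁻¹ * m₁ r ≤ max C₁ C₂ := (le_abs_self _).trans ((hC₁ r).trans (le_max_left _ _))
  have hm₂ : r * m₂ r ≤ max C₁ C₂ := (le_abs_self _).trans ((hC₂ r).trans (le_max_right _ _))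
  calc m₁ r * x ^ 2 + m₂ r * y ^ 2
      = r⁻¹ * m₁ r * (x ^ 2 * r) + r * m₂ r * (y ^ 2 / r) := by field_simp
    _ ≤ max C₁ C₂ * (x ^ 2 * r) + max C₁ C₂ * (y ^ 2 / r) := by gcongr
    _ = max C₁ C₂ * (x ^ 2 * r + y ^ 2 / r) := by ring

/-- `h` is integrable with integral zero: a null Lagrangian, which may be added to an integrand
without changing the integral. -/
structure HasZeroIntegral {X : Type*} [MeasurableSpace X] (μ : Measure X) (h : X → ℝ) : Prop where
  integrable : Integrable h μ
  integral_eq_zero : ∫ x, h x ∂μ = 0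

namespace HasZeroIntegral

variable {X : Type*} [MeasurableSpace X] {μ : Measure X} {h k u v : X → ℝ}

lemma add (hh : HasZeroIntegral μ h) (hk : HasZeroIntegral μ k) :
    HasZeroIntegral μ (fun x => h x + k x) where
  integrable := hh.integrable.add hk.integrable
  integral_eq_zero := by
    rw [MeasureTheory.integral_add hh.integrable hk.integrable, hh.integral_eq_zero,
      hk.integral_eq_zero, add_zero]

lemma const_mul (hh : HasZeroIntegral μ h) (c : ℝ) : HasZeroIntegral μ (fun x => c * h x) where
  integrable := hh.integrable.const_mul c
  integral_eq_zero := by rw [integral_const_mul, hh.integral_eq_zero, mul_zero]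

lemma congr_set {s : Set X} (hh : HasZeroIntegral (μ.restrict s) h) (hs : MeasurableSet s)
    (hhk : ∀ x ∈ s, h x = k x) : HasZeroIntegral (μ.restrict s) k where
  integrable := IntegrableOn.congr_fun hh.integrable hhk hs
  integral_eq_zero := (setIntegral_congr_fun hs hhk).symm.trans hh.integral_eq_zero

lemma integral_add (hh : HasZeroIntegral μ h) (hv : Integrable v μ) :
    ∫ x, v x + h x ∂μ = ∫ x, v x ∂μ := by
  rw [MeasureTheory.integral_add hv hh.integrable, hh.integral_eq_zero, add_zero]

lemma setIntegral_le {s : Set X} (hh : HasZeroIntegral (μ.restrict s) h) (hs : MeasurableSet s)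
    (hu : IntegrableOn u s μ) (hv : IntegrableOn v s μ) (huv : ∀ x ∈ s, u x ≤ v x + h x) :
    ∫ x in s, u x ∂μ ≤ ∫ x in s, v x ∂μ :=
  (setIntegral_mono_on hu (hv.add hh.integrable) hs huv).trans_eq (hh.integral_add hv)

end HasZeroIntegral

lemma fderiv_fun_sq_apply {E : Type*} [NormedAddCommGroup E] [NormedSpace ℝ E] {F : E → ℝ} {p : E}
    (hF : DifferentiableAt ℝ F p) (v : E) :
    fderiv ℝ (fun q => F q ^ 2) p v = 2 * F p * fderiv ℝ F p v := by
  rw [fderiv_fun_pow 2 hF]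
  simp

section PartialDerivatives

variable {F : ℝ × ℝ → ℝ} {a b c d : ℝ}

lemma hasDerivAt_fst_of_differentiableAt {x y : ℝ} (hF : DifferentiableAt ℝ F (x, y)) :
    HasDerivAt (fun t => F (t, y)) (fderiv ℝ F (x, y) (1, 0)) x :=
  hF.hasFDerivAt.comp_hasDerivAt x ((hasDerivAt_id x).prodMk (hasDerivAt_const x y))

lemma hasDerivAt_snd_of_differentiableAt {x y : ℝ} (hF : DifferentiableAt ℝ F (x, y)) :
    HasDerivAt (fun t => F (x, t)) (fderiv ℝ F (x, y) (0, 1)) y :=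
  hF.hasFDerivAt.comp_hasDerivAt y ((hasDerivAt_const y x).prodMk (hasDerivAt_id y))

lemma fderiv_mul_radial_fst {w : ℝ → ℝ} {p : ℝ × ℝ} (hw : DifferentiableAt ℝ w p.1)
    (hF : DifferentiableAt ℝ F p) :
    fderiv ℝ (fun q => w q.1 * F q) p (1, 0)
      = deriv w p.1 * F p + w p.1 * fderiv ℝ F p (1, 0) := by
  have hprod : DifferentiableAt ℝ (fun q : ℝ × ℝ => w q.1 * F q) p :=
    (hw.comp p differentiableAt_fst).mul hF
  exact (hasDerivAt_fst_of_differentiableAt hprod).unique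
    (hw.hasDerivAt.mul (hasDerivAt_fst_of_differentiableAt hF))

lemma setIntegral_fderiv_fst_eq_zero (hF : ContDiff ℝ 1 F) (hab : a ≤ b)
    (hbd : ∀ y, F (a, y) = F (b, y)) :
    ∫ p in Ioo a b ×ˢ Ioo c d, fderiv ℝ F p (1, 0) = 0 := by
  have hcont : Continuous fun p => fderiv ℝ F p (1, 0) :=
    (hF.continuous_fderiv one_ne_zero).clm_apply continuous_const
  have hint : IntegrableOn (fun p => fderiv ℝ F p (1, 0)) (Ioo a b ×ˢ Ioo c d) :=
    (hcont.continuousOn.integrableOn_compact (isCompact_Icc.prod isCompact_Icc)).mono_set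
      (prod_mono Ioo_subset_Icc_self Ioo_subset_Icc_self)
  rw [IntegrableOn, Measure.volume_eq_prod, ← Measure.prod_restrict] at hint
  rw [Measure.volume_eq_prod, ← Measure.prod_restrict, integral_prod_symm _ hint]
  refine integral_eq_zero_of_ae (.of_forall fun y => ?_)
  have hslice : Continuous fun x => fderiv ℝ F (x, y) (1, 0) := hcont.comp (by fun_prop)
  dsimp only [Pi.zero_apply]
  rw [← integral_Ioc_eq_integral_Ioo, ← intervalIntegral.integral_of_le hab,
    intervalIntegral.integral_eq_sub_of_hasDerivAt
      (fun x _ => hasDerivAt_fst_of_differentiableAt (hF.differentiable one_ne_zero (x, y)))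
      (hslice.intervalIntegrable a b),
    hbd, sub_self]

lemma setIntegral_mul_fderiv_snd_eq_zero (hF : ContDiff ℝ 1 F) (hcd : c ≤ d) {m : ℝ → ℝ}
    (hint : IntegrableOn (fun p : ℝ × ℝ => m p.1 * fderiv ℝ F p (0, 1)) (Ioo a b ×ˢ Ioo c d))
    (hbd : ∀ x, F (x, c) = F (x, d)) :
    ∫ p in Ioo a b ×ˢ Ioo c d, m p.1 * fderiv ℝ F p (0, 1) = 0 := by
  have hcont : Continuous fun p => fderiv ℝ F p (0, 1) :=
    (hF.continuous_fderiv one_ne_zero).clm_apply continuous_const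
  rw [Measure.volume_eq_prod] at hint
  rw [Measure.volume_eq_prod, setIntegral_prod _ hint]
  refine integral_eq_zero_of_ae (.of_forall fun x => ?_)
  have hslice : Continuous fun y => fderiv ℝ F (x, y) (0, 1) := hcont.comp (by fun_prop)
  dsimp only [Pi.zero_apply]
  rw [integral_const_mul, ← integral_Ioc_eq_integral_Ioo, ← intervalIntegral.integral_of_le hcd,
    intervalIntegral.integral_eq_sub_of_hasDerivAt
      (fun y _ => hasDerivAt_snd_of_differentiableAt (hF.differentiable one_ne_zero (x, y)))
      (hslice.intervalIntegrable c d),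
    hbd, sub_self, mul_zero]

end PartialDerivatives

/-- The logarithmic derivative `κ(φ) = cot(φ/2a)/(2a)` of the Dirichlet ground state `sin(φ/2a)` of
the interval `(0,2πa)`. -/
def groundStateLogDeriv (a φ : ℝ) : ℝ := Real.cot (φ / (2 * a)) / (2 * a)

/-- The function `κψ`, which is `∂_φψ` when `ψ` is a multiple of the angular ground state. -/
def groundStateTerm (a : ℝ) (ψ : ℝ × ℝ → ℝ) (p : ℝ × ℝ) : ℝ := groundStateLogDeriv a p.2 * ψ p

/-- The defect `∂_φψ - κψ`, which is `sin(φ/2a) ∂_φ(ψ / sin(φ/2a))`. -/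
def angularDefect (a : ℝ) (ψ : ℝ × ℝ → ℝ) (p : ℝ × ℝ) : ℝ :=
  fderiv ℝ ψ p (0, 1) - groundStateTerm a ψ p

/-- The derivative `∂_rψ - f(r)∂_φψ` along the twisted radial direction; `f` is the paper's `θ'`. -/
def twistedRadialDeriv (f : ℝ → ℝ) (ψ : ℝ × ℝ → ℝ) (p : ℝ × ℝ) : ℝ :=
  fderiv ℝ ψ p (1, 0) - f p.1 * fderiv ℝ ψ p (0, 1)

/-- The integrand in the numerator of the Rayleigh quotient of `lamRayleigh`, with the factor `r`
of the volume element included. -/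
def hardyDensity (a : ℝ) (f : ℝ → ℝ) (ψ : ℝ × ℝ → ℝ) (p : ℝ × ℝ) : ℝ :=
  (twistedRadialDeriv f ψ p ^ 2 + fderiv ℝ ψ p (0, 1) ^ 2 / p.1 ^ 2
    - 1 / (4 * a ^ 2) * ψ p ^ 2 / p.1 ^ 2) * p.1

/-- The nonnegative density left over from `hardyDensity` in the ground state representation. -/
def groundStateDensity (a : ℝ) (f : ℝ → ℝ) (ψ : ℝ × ℝ → ℝ) (p : ℝ × ℝ) : ℝ :=
  twistedRadialDeriv f ψ p ^ 2 * p.1 + angularDefect a ψ p ^ 2 / p.1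

section Wedge

variable {a R : ℝ} {f g w : ℝ → ℝ} {ψ F : ℝ × ℝ → ℝ} {n : ℕ∞ω}

lemma isOpen_wedgeU : IsOpen (wedgeU a) := isOpen_Ioi.prod isOpen_Ioo

lemma isOpen_wedgeUR : IsOpen (wedgeUR a R) := isOpen_Ioo.prod isOpen_Ioo

lemma measurableSet_wedgeUR : MeasurableSet (wedgeUR a R) := isOpen_wedgeUR.measurableSet

lemma wedgeUR_subset_wedgeU : wedgeUR a R ⊆ wedgeU a := prod_mono Ioo_subset_Ioi_self subset_rfl

lemma hasDerivAt_groundStateLogDeriv {φ : ℝ} (hφ : φ ∈ Ioo 0 (2 * π * a)) :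
    HasDerivAt (groundStateLogDeriv a) (-groundStateLogDeriv a φ ^ 2 - 1 / (4 * a ^ 2)) φ := by
  have ha : 0 < a := by
    by_contra! h
    exact (hφ.1.trans hφ.2).not_ge (mul_nonpos_of_nonneg_of_nonpos (by positivity) h)
  have hsin : Real.sin (φ / (2 * a)) ≠ 0 := by
    refine (Real.sin_pos_of_pos_of_lt_pi (div_pos hφ.1 (by positivity)) ?_).ne'
    rw [div_lt_iff₀ (by positivity)]
    linarith [hφ.2]
  have hlin : HasDerivAt (fun φ : ℝ => φ / (2 * a)) (1 / (2 * a)) φ :=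
    (hasDerivAt_id φ).div_const (2 * a)
  have hcot := ((hlin.cos.div hlin.sin hsin).div_const (2 * a))
  refine (hcot.congr_deriv ?_).congr_of_eventuallyEq (.of_forall fun x => ?_)
  · rw [groundStateLogDeriv, Real.cot_eq_cos_div_sin]
    field_simp
    ring
  · simp [groundStateLogDeriv, Real.cot_eq_cos_div_sin]

lemma contDiffOn_groundStateLogDeriv :
    ContDiffOn ℝ 1 (groundStateLogDeriv a) (Ioo 0 (2 * π * a)) := by
  have hd : DifferentiableOn ℝ (groundStateLogDeriv a) (Ioo 0 (2 * π * a)) := fun φ hφ =>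
    (hasDerivAt_groundStateLogDeriv hφ).differentiableAt.differentiableWithinAt
  have hcont : ContinuousOn (fun φ => -groundStateLogDeriv a φ ^ 2 - 1 / (4 * a ^ 2))
      (Ioo 0 (2 * π * a)) := ((hd.continuousOn.pow 2).neg).sub continuousOn_const
  refine (contDiffOn_one_iff_derivWithin isOpen_Ioo.uniqueDiffOn).2
    ⟨hd, hcont.congr fun φ hφ => ?_⟩
  rw [derivWithin_of_isOpen isOpen_Ioo hφ, (hasDerivAt_groundStateLogDeriv hφ).deriv]

namespace IsTestFunction

lemma mul_radial (hF : IsTestFunction n (wedgeU a) F) (hw : ContDiffOn ℝ n w (Ioi 0)) :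
    IsTestFunction n (wedgeU a) (fun p => w p.1 * F p) :=
  hF.mul_left isOpen_wedgeU (hw.comp contDiff_fst.contDiffOn fun _ hp => hp.1)

lemma mul_radial_of_continuousOn (hF : IsTestFunction 0 (wedgeU a) F)
    (hw : ContinuousOn w (Ioi 0)) : IsTestFunction 0 (wedgeU a) (fun p => w p.1 * F p) :=
  hF.mul_radial (contDiffOn_zero.2 hw)

lemma div_fst (hF : IsTestFunction n (wedgeU a) F) :
    IsTestFunction n (wedgeU a) (fun p => F p / p.1) := by
  simpa only [div_eq_inv_mul] using
    hF.mul_radial (w := Inv.inv) (contDiffOn_id.inv fun r hr => ne_of_gt hr)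

lemma mul_fst (hF : IsTestFunction n (wedgeU a) F) :
    IsTestFunction n (wedgeU a) (fun p => F p * p.1) := by
  simpa only [id, mul_comm] using hF.mul_radial (w := id) contDiffOn_id

lemma groundStateTerm (hψ : IsTestFunction 1 (wedgeU a) ψ) :
    IsTestFunction 1 (wedgeU a) (groundStateTerm a ψ) :=
  hψ.mul_left isOpen_wedgeU
    (contDiffOn_groundStateLogDeriv.comp contDiff_snd.contDiffOn fun _ hp => hp.2)

lemma angularDefect (hψ : IsTestFunction 1 (wedgeU a) ψ) :
    IsTestFunction 0 (wedgeU a) (angularDefect a ψ) :=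
  (hψ.fderiv_apply (0, 1)).sub (hψ.groundStateTerm.of_le zero_le_one)

lemma twistedRadialDeriv (hψ : IsTestFunction 1 (wedgeU a) ψ) (hf : ContinuousOn f (Ioi 0)) :
    IsTestFunction 0 (wedgeU a) (twistedRadialDeriv f ψ) :=
  (hψ.fderiv_apply (1, 0)).sub ((hψ.fderiv_apply (0, 1)).mul_radial_of_continuousOn hf)

lemma groundStateDensity (hψ : IsTestFunction 1 (wedgeU a) ψ) (hf : ContinuousOn f (Ioi 0)) :
    IsTestFunction 0 (wedgeU a) (groundStateDensity a f ψ) :=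
  (hψ.twistedRadialDeriv hf).sq.mul_fst.add hψ.angularDefect.sq.div_fst

end IsTestFunction

lemma hasZeroIntegral_mul_fderiv_snd (ha : 0 ≤ a) (hw : ContinuousOn w (Ioi 0))
    (hF : IsTestFunction 1 (wedgeU a) F) :
    HasZeroIntegral (volume.restrict (wedgeUR a R)) fun p => w p.1 * fderiv ℝ F p (0, 1) := by
  have hint := ((hF.fderiv_apply (0, 1)).mul_radial_of_continuousOn hw).integrable
    (μ := volume.restrict (wedgeUR a R))
  refine ⟨hint, setIntegral_mul_fderiv_snd_eq_zero hF.contDiff (by positivity) hint fun r => ?_⟩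
  rw [hF.eq_zero_of_notMem fun h => lt_irrefl _ h.2.1,
    hF.eq_zero_of_notMem fun h => lt_irrefl _ h.2.2]

lemma hasZeroIntegral_fderiv_fst (hR : 0 ≤ R) (hF : IsTestFunction 1 (wedgeU a) F)
    (hFR : ∀ φ, F (R, φ) = 0) :
    HasZeroIntegral (volume.restrict (wedgeUR a R)) fun p => fderiv ℝ F p (1, 0) :=
  ⟨(hF.fderiv_apply (1, 0)).integrable, setIntegral_fderiv_fst_eq_zero hF.contDiff hR fun φ =>
    (hF.eq_zero_of_notMem (p := (0, φ)) fun h => lt_irrefl (0 : ℝ) h.1).trans (hFR φ).symm⟩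

lemma fderiv_groundStateTerm_mul_fst (hψ : IsTestFunction 1 (wedgeU a) ψ) (p : ℝ × ℝ) :
    fderiv ℝ (fun q => groundStateTerm a ψ q * ψ q) p (1, 0)
      = 2 * groundStateTerm a ψ p * fderiv ℝ ψ p (1, 0) := by
  have hψr := hasDerivAt_fst_of_differentiableAt (hψ.contDiff.differentiable one_ne_zero p)
  have hprod := hasDerivAt_fst_of_differentiableAt
    ((hψ.groundStateTerm.mul hψ).contDiff.differentiable one_ne_zero p)
  rw [hprod.unique ((hψr.const_mul (groundStateLogDeriv a p.2)).mul hψr)]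
  simp only [groundStateTerm]
  ring

lemma fderiv_groundStateTerm_mul_snd (hψ : IsTestFunction 1 (wedgeU a) ψ) {p : ℝ × ℝ}
    (hp : p ∈ wedgeU a) :
    fderiv ℝ (fun q => groundStateTerm a ψ q * ψ q) p (0, 1) = groundStateTerm a ψ p ^ 2
      + 2 * groundStateTerm a ψ p * angularDefect a ψ p - 1 / (4 * a ^ 2) * ψ p ^ 2 := by
  have hψφ := hasDerivAt_snd_of_differentiableAt (hψ.contDiff.differentiable one_ne_zero p)
  have hprod := hasDerivAt_snd_of_differentiableAt
    ((hψ.groundStateTerm.mul hψ).contDiff.differentiable one_ne_zero p)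
  rw [hprod.unique (((hasDerivAt_groundStateLogDeriv hp.2).mul hψφ).mul hψφ)]
  simp only [angularDefect, groundStateTerm, Pi.mul_apply]
  ring

/-- The Riccati equation `κ' = -κ² - 1/(4a²)` turns this integrand into `w ∂_φ(κψ²)`. -/
lemma hasZeroIntegral_groundState (ha : 0 ≤ a) (hw : ContinuousOn w (Ioi 0))
    (hψ : IsTestFunction 1 (wedgeU a) ψ) :
    HasZeroIntegral (volume.restrict (wedgeUR a R)) fun p => w p.1 * (groundStateTerm a ψ p ^ 2
      + 2 * groundStateTerm a ψ p * angularDefect a ψ p - 1 / (4 * a ^ 2) * ψ p ^ 2) := by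
  refine (hasZeroIntegral_mul_fderiv_snd ha hw (hψ.groundStateTerm.mul hψ)).congr_set
    measurableSet_wedgeUR fun p hp => ?_
  rw [fderiv_groundStateTerm_mul_snd hψ (wedgeUR_subset_wedgeU hp)]

/-- The integrand is `∂_r(w κψ²) - ½ w' ∂_φ(ψ²)`. -/
lemma hasZeroIntegral_groundState_radial (ha : 0 ≤ a) (hR : 0 ≤ R)
    (hw : ContDiffOn ℝ 1 w (Ioi 0)) (hwR : w R = 0) (hψ : IsTestFunction 1 (wedgeU a) ψ) :
    HasZeroIntegral (volume.restrict (wedgeUR a R)) fun p =>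
      2 * w p.1 * groundStateTerm a ψ p * fderiv ℝ ψ p (1, 0)
        - deriv w p.1 * ψ p * angularDefect a ψ p := by
  have hPψ := hψ.groundStateTerm.mul hψ
  have hr := hasZeroIntegral_fderiv_fst hR (hPψ.mul_radial hw) fun φ => by rw [hwR, zero_mul]
  have hφ := hasZeroIntegral_mul_fderiv_snd (R := R) ha
    (hw.continuousOn_deriv_of_isOpen isOpen_Ioi le_rfl) hψ.sq
  refine (hr.add (hφ.const_mul (-1 / 2))).congr_set
    measurableSet_wedgeUR fun p hp => ?_
  rw [fderiv_mul_radial_fst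
    ((hw.contDiffAt (Ioi_mem_nhds hp.1.1)).differentiableAt one_ne_zero)
    (hPψ.contDiff.differentiable one_ne_zero p), fderiv_groundStateTerm_mul_fst hψ,
    fderiv_fun_sq_apply (hψ.contDiff.differentiable one_ne_zero p), angularDefect]
  ring

/-- The integrand is `∂_r(gψ²) - g f ∂_φ(ψ²)`. -/
lemma hasZeroIntegral_twistedRadialDeriv (ha : 0 ≤ a) (hR : 0 ≤ R) (hf : ContinuousOn f (Ioi 0))
    (hg : ContDiffOn ℝ 1 g (Ioi 0)) (hgR : g R = 0) (hψ : IsTestFunction 1 (wedgeU a) ψ) :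
    HasZeroIntegral (volume.restrict (wedgeUR a R)) fun p =>
      deriv g p.1 * ψ p ^ 2 + 2 * g p.1 * ψ p * twistedRadialDeriv f ψ p := by
  have hψp := hψ.contDiff.differentiable one_ne_zero
  have hr := hasZeroIntegral_fderiv_fst hR (hψ.sq.mul_radial hg) fun φ => by rw [hgR, zero_mul]
  have hφ := hasZeroIntegral_mul_fderiv_snd (R := R) ha (hg.continuousOn.mul hf) hψ.sq
  refine (hr.add (hφ.const_mul (-1))).congr_set
    measurableSet_wedgeUR fun p hp => ?_
  rw [fderiv_mul_radial_fst
    ((hg.contDiffAt (Ioi_mem_nhds hp.1.1)).differentiableAt one_ne_zero)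
    ((hψp p).fun_pow 2), fderiv_fun_sq_apply (hψp p),
    fderiv_fun_sq_apply (hψp p), twistedRadialDeriv, Pi.mul_apply]
  ring

lemma integral_hardyDensity_eq_integral_groundStateDensity (ha : 0 ≤ a)
    (hf : ContinuousOn f (Ioi 0)) (hψ : IsTestFunction 1 (wedgeU a) ψ) :
    ∫ p in wedgeUR a R, hardyDensity a f ψ p = ∫ p in wedgeUR a R, groundStateDensity a f ψ p := by
  have hinv : ContinuousOn (fun r : ℝ => r⁻¹) (Ioi 0) :=
    continuousOn_id.inv₀ fun r hr => ne_of_gt hr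
  rw [← (hasZeroIntegral_groundState ha hinv hψ).integral_add (hψ.groundStateDensity hf).integrable]
  refine setIntegral_congr_fun measurableSet_wedgeUR fun p hp => ?_
  have hr : p.1 ≠ 0 := hp.1.1.ne'
  have hφ : fderiv ℝ ψ p (0, 1) = groundStateTerm a ψ p + angularDefect a ψ p := by
    rw [angularDefect, add_sub_cancel]
  dsimp only [hardyDensity, groundStateDensity]
  rw [hφ]
  field_simp
  ring

end Wedge

/-- The last summand is `-3/2` times the integrand of `hasZeroIntegral_groundState` plus `2s` times
that of `hasZeroIntegral_groundState_radial`, for the weight `e²`; the coefficients come from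
Young's inequality applied to `e²P² ≤ s f e²P²`. -/
lemma mul_sq_le_quadratic_add_null {c s f e e' P x y z : ℝ} (hc : 0 < c)
    (he : e ^ 2 ≤ s * f * e ^ 2) :
    c * (e ^ 2 * z ^ 2) ≤
      8 * s ^ 2 * e ^ 2 * x ^ 2
        + (3 / 2 * e ^ 2 + 8 * (s ^ 2 / c) * e' ^ 2 + 8 * s ^ 2 * (f ^ 2 * e ^ 2)) * y ^ 2
        + (-3 / 2 * (e ^ 2 * (P ^ 2 + 2 * P * y - c * z ^ 2))
          + 2 * s * (2 * e ^ 2 * P * (x + f * (P + y)) - 2 * e * e' * z * y)) := by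
  have hP : e ^ 2 * P ^ 2 ≤ s * f * e ^ 2 * P ^ 2 := mul_le_mul_of_nonneg_right he (sq_nonneg P)
  have hPy : 0 ≤ (e * (P - y)) ^ 2 := sq_nonneg _
  have hzy : 8 * s * e * e' * z * y ≤ c * (e ^ 2 * z ^ 2) + 16 * (s ^ 2 / c) * e' ^ 2 * y ^ 2 := by
    have hsq : 0 ≤ (c * e * z - 4 * s * e' * y) ^ 2 / c := by positivity
    have hexp : (c * e * z - 4 * s * e' * y) ^ 2 / c = c * (e ^ 2 * z ^ 2)
        + 16 * (s ^ 2 / c) * e' ^ 2 * y ^ 2 - 8 * s * e * e' * z * y := by field_simp; ring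
    linarith
  have hPxy : 0 ≤ (e * P + 2 * s * e * (x + f * y)) ^ 2 := sq_nonneg _
  have hxy : 0 ≤ (s * e * (x - f * y)) ^ 2 := sq_nonneg _
  linarith

lemma exists_radial_weight {R : ℝ} {ρ : ℝ → ℝ} (hR : 0 ≤ R) (hρ : Continuous ρ)
    (hρR : 0 < ∫ r in (0 : ℝ)..R, ρ r) :
    ∃ g c M, 0 ≤ c ∧ ContDiff ℝ 1 g ∧ g R = 0 ∧ (∀ r, deriv g r = r - c * ρ r) ∧
      ∀ r ∈ Ioo 0 R, |g r| ≤ M * r := by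
  set c := (∫ r in (0 : ℝ)..R, r) / ∫ r in (0 : ℝ)..R, ρ r
  set h : ℝ → ℝ := fun r => r - c * ρ r
  have hh : Continuous h := by fun_prop
  have hderiv (r : ℝ) : HasDerivAt (fun r => ∫ t in (0 : ℝ)..r, h t) (h r) r :=
    (hh.integral_hasStrictDerivAt 0 r).hasDerivAt
  obtain ⟨M, hM⟩ := isCompact_Icc.exists_bound_of_continuousOn (s := Icc 0 R) hh.continuousOn
  refine ⟨fun r => ∫ t in (0 : ℝ)..r, h t, c, M, ?_, ?_, ?_, fun r => (hderiv r).deriv,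
    fun r hr => ?_⟩
  · exact div_nonneg (intervalIntegral.integral_nonneg hR fun r hr => hr.1) hρR.le
  · exact contDiff_one_iff_deriv.2
      ⟨fun r => (hderiv r).differentiableAt, hh.congr fun r => (hderiv r).deriv.symm⟩
  · change ∫ r in (0 : ℝ)..R, (r - c * ρ r) = 0
    rw [intervalIntegral.integral_sub (continuous_id'.intervalIntegrable _ _)
      ((hρ.const_mul c).intervalIntegrable _ _), intervalIntegral.integral_const_mul,
      div_mul_cancel₀ _ hρR.ne', sub_self]
  · have hbound := intervalIntegral.norm_integral_le_of_norm_le_const (a := 0) (b := r) (f := h)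
      fun t ht => hM t ?_
    · simpa [abs_of_pos hr.1] using hbound
    · rw [uIoc_of_le hr.1.le] at ht
      exact ⟨ht.1.le, ht.2.trans hr.2.le⟩

section Positivity

variable {a R : ℝ} {f η ρ : ℝ → ℝ}

lemma groundStateDensity_nonneg {ψ : ℝ × ℝ → ℝ} {p : ℝ × ℝ} (hp : p ∈ wedgeUR a R) :
    0 ≤ groundStateDensity a f ψ p := by
  have hr : 0 < p.1 := hp.1.1
  rw [groundStateDensity]
  positivity

lemma exists_cutoff_quadratic_le (hf : ContinuousOn f (Ioi 0)) (hη : IsTestFunction 1 (Ioi 0) η)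
    (s c : ℝ) :
    ∃ C, ∀ r > 0, ∀ x y, 8 * s ^ 2 * η r ^ 2 * x ^ 2
        + (3 / 2 * η r ^ 2 + 8 * (s ^ 2 / c) * deriv η r ^ 2
          + 8 * s ^ 2 * (f r ^ 2 * η r ^ 2)) * y ^ 2
      ≤ C * (x ^ 2 * r + y ^ 2 / r) := by
  have hη₀ : IsTestFunction 0 (Ioi 0) fun r => η r ^ 2 := (hη.of_le zero_le_one).sq
  have hη₁ : IsTestFunction 0 (Ioi 0) fun r => deriv η r ^ 2 := (hη.fderiv_apply 1).sq
  have hfη : IsTestFunction 0 (Ioi 0) fun r => f r ^ 2 * η r ^ 2 :=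
    hη₀.mul_left isOpen_Ioi (contDiffOn_zero.2 (hf.pow 2))
  exact exists_quadratic_le_of_isTestFunction (hη₀.const_mul (8 * s ^ 2))
    (((hη₀.const_mul (3 / 2)).add (hη₁.const_mul (8 * (s ^ 2 / c)))).add
      (hfη.const_mul (8 * s ^ 2)))

/-- On the support of `η` the number `s f` is at least `1`, so `f ≠ 0` has a sign there and the
twisting term `f ∂_φψ` in the radial derivative controls `κψ`, hence `ψ`. -/
lemma exists_integral_sq_mul_sq_le (ha : 0 < a) (hR : 0 ≤ R) (hf : ContinuousOn f (Ioi 0))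
    (hη : IsTestFunction 1 (Ioo 0 R) η) {s : ℝ} (hs : ∀ r, η r ≠ 0 → 1 ≤ s * f r) :
    ∃ C, ∀ ψ, IsTestFunction 1 (wedgeU a) ψ →
      ∫ p in wedgeUR a R, η p.1 ^ 2 * ψ p ^ 2
        ≤ C * ∫ p in wedgeUR a R, groundStateDensity a f ψ p := by
  set k := 1 / (4 * a ^ 2) with hk
  have hk0 : 0 < k := by positivity
  have hη' : IsTestFunction 1 (Ioi 0) η := hη.mono Ioo_subset_Ioi_self
  have hderiv : ∀ r, deriv (fun r => η r ^ 2) r = 2 * η r * deriv η r := fun r =>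
    fderiv_fun_sq_apply (hη.contDiff.differentiable one_ne_zero r) 1
  have hηR : η R = 0 := hη.eq_zero_of_notMem fun h => lt_irrefl R h.2
  obtain ⟨C, hC⟩ := exists_cutoff_quadratic_le hf hη' s k
  refine ⟨k⁻¹ * C, fun ψ hψ => ?_⟩
  have hnull := ((hasZeroIntegral_groundState (R := R) ha.le hη'.sq.contDiff.continuous.continuousOn
    hψ).const_mul (-3 / 2)).add ((hasZeroIntegral_groundState_radial ha.le hR
      hη'.sq.contDiff.contDiffOn (by simp [hηR]) hψ).const_mul (2 * s))
  have hu : IsTestFunction 1 (wedgeU a) fun p => η p.1 ^ 2 * ψ p ^ 2 :=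
    hψ.sq.mul_radial hη'.sq.contDiff.contDiffOn
  have hle := hnull.setIntegral_le measurableSet_wedgeUR (hu.const_mul k).integrable.integrableOn
    ((hψ.groundStateDensity hf).const_mul C).integrable.integrableOn fun p hp => ?_
  · rw [integral_const_mul, integral_const_mul] at hle
    rwa [mul_assoc, inv_mul_eq_div, le_div_iff₀' hk0]
  have hsη : η p.1 ^ 2 ≤ s * f p.1 * η p.1 ^ 2 := by
    by_cases h : η p.1 = 0
    · simp [h]
    · exact le_mul_of_one_le_left (sq_nonneg _) (hs _ h)
  have hq := hC p.1 hp.1.1 (twistedRadialDeriv f ψ p) (angularDefect a ψ p)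
  have hpointwise := mul_sq_le_quadratic_add_null (e' := deriv η p.1) (P := groundStateTerm a ψ p)
    (x := twistedRadialDeriv f ψ p) (y := angularDefect a ψ p) (z := ψ p) hk0 hsη
  have hψr : fderiv ℝ ψ p (1, 0) = twistedRadialDeriv f ψ p
      + f p.1 * (groundStateTerm a ψ p + angularDefect a ψ p) := by
    rw [twistedRadialDeriv, angularDefect]; ring
  rw [hderiv, hψr, ← hk, groundStateDensity]
  linarith

lemma exists_integral_sq_mul_fst_le (ha : 0 ≤ a) (hR : 0 ≤ R) (hf : ContinuousOn f (Ioi 0))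
    (hρ : Continuous ρ) (hρR : 0 < ∫ r in (0 : ℝ)..R, ρ r) :
    ∃ c C, 0 ≤ c ∧ ∀ ψ, IsTestFunction 1 (wedgeU a) ψ →
      ∫ p in wedgeUR a R, ψ p ^ 2 * p.1 ≤ c * (∫ p in wedgeUR a R, ρ p.1 * ψ p ^ 2)
        + C * ∫ p in wedgeUR a R, groundStateDensity a f ψ p := by
  obtain ⟨g, c, M, hc, hg, hgR, hg', hgM⟩ := exists_radial_weight hR hρ hρR
  refine ⟨2 * c, 4 * M ^ 2, by positivity, fun ψ hψ => ?_⟩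
  have hnull := (hasZeroIntegral_twistedRadialDeriv ha hR hf hg.contDiffOn hgR hψ).const_mul 2
  have hρψ := ((hψ.of_le zero_le_one).sq.mul_radial_of_continuousOn hρ.continuousOn).const_mul
    (2 * c)
  have hdens := (hψ.groundStateDensity hf).const_mul (4 * M ^ 2)
  rw [← integral_const_mul, ← integral_const_mul, ← integral_add hρψ.integrable hdens.integrable]
  refine hnull.setIntegral_le measurableSet_wedgeUR hψ.sq.mul_fst.integrable.integrableOn
    (hρψ.add hdens).integrable.integrableOn fun p hp => ?_
  have hr : 0 < p.1 := hp.1.1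
  set x := twistedRadialDeriv f ψ p
  have hx : x ^ 2 * p.1 ≤ groundStateDensity a f ψ p :=
    le_add_of_nonneg_right (by positivity)
  have hyoung : -(4 * g p.1 * ψ p * x) ≤ ψ p ^ 2 * p.1 + 4 * M ^ 2 * (x ^ 2 * p.1) :=
    calc -(4 * g p.1 * ψ p * x) ≤ |4 * g p.1 * ψ p * x| := neg_le_abs _
      _ = 4 * |g p.1| * |ψ p| * |x| := by simp [abs_mul]
      _ ≤ 4 * (M * p.1) * |ψ p| * |x| := by gcongr; exact hgM p.1 hp.1
      _ = |ψ p| ^ 2 * p.1 + 4 * M ^ 2 * (|x| ^ 2 * p.1) - (|ψ p| - 2 * M * |x|) ^ 2 * p.1 := by ring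
      _ ≤ |ψ p| ^ 2 * p.1 + 4 * M ^ 2 * (|x| ^ 2 * p.1) := sub_le_self _ (by positivity)
      _ = ψ p ^ 2 * p.1 + 4 * M ^ 2 * (x ^ 2 * p.1) := by rw [sq_abs, sq_abs]
  rw [hg']
  have hMx := mul_le_mul_of_nonneg_left hx (show 0 ≤ 4 * M ^ 2 by positivity)
  linarith

lemma exists_isTestFunction_one_le_mul (hf : ContinuousOn f (Ioi 0))
    (hne : ∃ r ∈ Ioo 0 R, f r ≠ 0) :
    ∃ η s, IsTestFunction 1 (Ioo 0 R) η ∧ (∀ r, η r ≠ 0 → 1 ≤ s * f r) ∧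
      0 < ∫ r in (0 : ℝ)..R, η r ^ 2 := by
  obtain ⟨r₀, hr₀, hfr₀⟩ := hne
  have hR : 0 < R := hr₀.1.trans hr₀.2
  have hcont : ContinuousAt (fun r => 2 / f r₀ * f r) r₀ :=
    continuousAt_const.mul (hf.continuousAt (Ioi_mem_nhds hr₀.1))
  have hval : 1 < 2 / f r₀ * f r₀ := by rw [div_mul_cancel₀ _ hfr₀]; exact one_lt_two
  have hnhds : Ioo 0 R ∩ {r | 1 < 2 / f r₀ * f r} ∈ 𝓝 r₀ :=
    Filter.inter_mem (Ioo_mem_nhds hr₀.1 hr₀.2) (hcont.eventually_const_lt hval)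
  obtain ⟨η, hη, hηr₀⟩ := exists_isTestFunction_one_apply_eq_one hnhds
  refine ⟨η, 2 / f r₀, hη.mono inter_subset_left, fun r hr => ?_, ?_⟩
  · by_contra! h
    exact hr (hη.eq_zero_of_notMem fun hmem => hmem.2.not_ge h.le)
  · refine intervalIntegral.integral_pos hR (hη.contDiff.continuous.pow 2).continuousOn
      (fun r _ => sq_nonneg _) ⟨r₀, Ioo_subset_Icc_self hr₀, ?_⟩
    simp [hηr₀]

lemma exists_pos_mul_integral_le_integral_hardyDensity (ha : 0 < a) (hf : ContinuousOn f (Ioi 0))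
    (hne : ∃ r ∈ Ioo 0 R, f r ≠ 0) :
    ∃ ε > 0, ∀ ψ, IsTestFunction 1 (wedgeU a) ψ →
      ε * ∫ p in wedgeUR a R, ψ p ^ 2 * p.1 ≤ ∫ p in wedgeUR a R, hardyDensity a f ψ p := by
  have hR : 0 ≤ R := hne.elim fun r hr => (hr.1.1.trans hr.1.2).le
  obtain ⟨η, s, hη, hs, hηpos⟩ := exists_isTestFunction_one_le_mul hf hne
  obtain ⟨C₁, hC₁⟩ := exists_integral_sq_mul_sq_le ha hR hf hη hs
  obtain ⟨c, C₂, hc, hC₂⟩ :=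
    exists_integral_sq_mul_fst_le ha.le hR hf (hη.contDiff.continuous.pow 2) hηpos
  refine ⟨(|c * C₁ + C₂| + 1)⁻¹, by positivity, fun ψ hψ => ?_⟩
  rw [integral_hardyDensity_eq_integral_groundStateDensity ha.le hf hψ]
  set N := ∫ p in wedgeUR a R, groundStateDensity a f ψ p
  have hN : 0 ≤ N := setIntegral_nonneg measurableSet_wedgeUR fun p => groundStateDensity_nonneg
  rw [inv_mul_le_iff₀ (by positivity)]
  calc ∫ p in wedgeUR a R, ψ p ^ 2 * p.1
      ≤ c * (∫ p in wedgeUR a R, η p.1 ^ 2 * ψ p ^ 2) + C₂ * N := hC₂ ψ hψ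
    _ ≤ c * (C₁ * N) + C₂ * N := by gcongr; exact hC₁ ψ hψ
    _ = (c * C₁ + C₂) * N := by ring
    _ ≤ (|c * C₁ + C₂| + 1) * N := 
      mul_le_mul_of_nonneg_right ((le_abs_self _).trans (lt_add_one _).le) hN

lemma integral_sq_mul_fst_pos {ψ : ℝ × ℝ → ℝ} (hψ : IsTestFunction 1 (wedgeU a) ψ)
    (hne : ∃ p ∈ wedgeUR a R, ψ p ≠ 0) : 0 < ∫ p in wedgeUR a R, ψ p ^ 2 * p.1 := by
  obtain ⟨q, hq, hψq⟩ := hne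
  rw [setIntegral_pos_iff_support_of_nonneg_ae
    (ae_restrict_of_forall_mem measurableSet_wedgeUR fun p hp =>
      mul_nonneg (sq_nonneg _) hp.1.1.le) hψ.sq.mul_fst.integrable.integrableOn]
  have hopen : IsOpen (Function.support (fun p => ψ p ^ 2 * p.1) ∩ wedgeUR a R) :=
    hψ.sq.mul_fst.contDiff.continuous.isOpen_support.inter isOpen_wedgeUR
  exact hopen.measure_pos _ ⟨q, mul_ne_zero (pow_ne_zero 2 hψq) hq.1.1.ne', hq⟩

lemma le_lamRayleigh {ε : ℝ} (ha : 0 < a) (hR : 0 < R)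
    (h : ∀ ψ, IsTestFunction 1 (wedgeU a) ψ →
      ε * ∫ p in wedgeUR a R, ψ p ^ 2 * p.1 ≤ ∫ p in wedgeUR a R, hardyDensity a f ψ p) :
    ε ≤ lamRayleigh a R f := by
  have hmid : (R / 2, π * a) ∈ wedgeUR a R := by
    have hπa : 0 < π * a := by positivity
    exact ⟨⟨by linarith, by linarith⟩, hπa, by linarith⟩
  obtain ⟨ψ₀, hψ₀, hψ₀mid⟩ := exists_isTestFunction_one_apply_eq_one (isOpen_wedgeUR.mem_nhds hmid)
  have hne : ¬ ∀ p ∈ wedgeUR a R, ψ₀ p = 0 := fun h₀ =>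
    one_ne_zero (hψ₀mid.symm.trans (h₀ _ hmid))
  refine le_csInf ⟨_, ψ₀, hψ₀.contDiff, hψ₀.hasCompactSupport,
    hψ₀.tsupport_subset.trans wedgeUR_subset_wedgeU, hne, rfl⟩ ?_
  rintro q ⟨ψ, hψ, hψc, hψU, hψne, rfl⟩
  have hψ : IsTestFunction 1 (wedgeU a) ψ := ⟨hψ, hψc, hψU⟩
  rw [le_div_iff₀ (integral_sq_mul_fst_pos hψ (by simpa using hψne))]
  exact h ψ hψ

theorem lamRayleigh_pos_general (ha : 0 < a) (hf : ContinuousOn f (Ioi 0))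
    (hne : ∃ r ∈ Ioo 0 R, f r ≠ 0) : 0 < lamRayleigh a R f := by
  have hR : 0 < R := hne.elim fun r hr => hr.1.1.trans hr.1.2
  obtain ⟨ε, hε, h⟩ := exists_pos_mul_integral_le_integral_hardyDensity ha hf hne
  exact hε.trans_le (le_lamRayleigh ha hR h)

end Positivity

/-- **Positivity of the local Hardy constant for non-trivially curved wedges.**
If `a ∈ (0,1]`, `θ ∈ C¹((0,∞))` with `r θ'(r)` bounded and `θ'` not identically zero,
then there is `R₀ > 0` such that `λ(R,θ') > 0` for all `R ≥ R₀`. -/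
theorem lamRayleigh_pos
    (a : ℝ) (ha : a ∈ Ioc (0:ℝ) 1)
    (θ θ' : ℝ → ℝ)
    (hderiv : ∀ r ∈ Ioi (0:ℝ), HasDerivAt θ (θ' r) r)
    (hcont : ContinuousOn θ' (Ioi 0))
    (C : ℝ) (hC : ∀ r ∈ Ioi (0:ℝ), |r * θ' r| ≤ C)
    (hne : ∃ r ∈ Ioi (0:ℝ), θ' r ≠ 0) :
    ∃ R₀ > 0, ∀ R ≥ R₀, 0 < lamRayleigh a R θ' := by
  obtain ⟨r₀, hr₀, hθ'r₀⟩ := hne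
  exact ⟨r₀ + 1, add_pos hr₀ one_pos, fun R hR =>
    lamRayleigh_pos_general ha.1 hcont ⟨r₀, ⟨hr₀, by linarith⟩, hθ'r₀⟩⟩
end
end

section
/- Let r₀ > 0. Then for every continuously differentiable function g with compact support in (r₀,∞) one has ∫_{r₀}^∞ |g'(r)|² r dr ≥ (1/4) ∫_{r₀}^∞ |g(r)|² / (r² (log(r/r₀))²) · r dr. -/
open MeasureTheory Real Set

noncomputable section

/-! The inequality is a Riccati (ground state) argument. For a weight `p > 0` and any `C¹` function
`φ`, expanding the square in `p ‖g' - (φ / p) g‖² ≥ 0` gives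
`p ‖g'‖² ≥ (φ ‖g‖²)' - (φ' + φ² / p) ‖g‖²`, and the total derivative integrates to zero.
The ground state of the logarithmic problem is `√|log (r / r₀)|`; its logarithmic derivative times
the weight `p = r` is `φ = 1 / (2 log (r / r₀))`, for which
`-(φ' + φ² / r) = 1 / (4 r log² (r / r₀))`.
-/

open scoped RealInnerProductSpace

section Integrability

variable {X E : Type*} [TopologicalSpace X] [T2Space X] [MeasurableSpace X] [OpensMeasurableSpace X]
  {μ : Measure X} [IsFiniteMeasureOnCompacts μ] [NormedAddCommGroup E]

theorem integrable_of_continuousOn_of_support_subset {f : X → E} {K : Set X}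
    (hK : IsCompact K) (hf : ContinuousOn f K) (hfK : Function.support f ⊆ K) :
    Integrable f μ :=
  (integrableOn_iff_integrable_of_support_subset hfK).1 (hf.integrableOn_compact hK)

theorem integrable_mul_norm_sq_of_continuousOn_tsupport {g : X → E} {φ : X → ℝ}
    (hg : Continuous g) (hgc : HasCompactSupport g) (hφ : ContinuousOn φ (tsupport g)) :
    Integrable (fun x ↦ φ x * ‖g x‖ ^ 2) μ := by
  refine integrable_of_continuousOn_of_support_subset hgc (hφ.mul (by fun_prop)) fun x hx ↦ ?_
  exact subset_tsupport g fun h ↦ hx (by simp [h])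

end Integrability

section InnerProduct

variable {E : Type*} [NormedAddCommGroup E] [InnerProductSpace ℝ E]

theorem two_mul_mul_inner_le_div_mul_norm_sq_add {p : ℝ} (hp : 0 < p) (c : ℝ) (u v : E) :
    2 * c * ⟪u, v⟫ ≤ c ^ 2 / p * ‖u‖ ^ 2 + p * ‖v‖ ^ 2 := by
  have expand : p * ‖v - (c / p) • u‖ ^ 2
      = c ^ 2 / p * ‖u‖ ^ 2 + p * ‖v‖ ^ 2 - 2 * c * ⟪u, v⟫ := by
    rw [norm_sub_sq_real, inner_smul_right, norm_smul, mul_pow, Real.norm_eq_abs, sq_abs,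
      real_inner_comm]
    field_simp
    ring
  have square_nonneg : 0 ≤ p * ‖v - (c / p) • u‖ ^ 2 := by positivity
  linarith

variable {g : ℝ → E} {φ φ' : ℝ → ℝ}

theorem hasDerivAt_mul_norm_sq_of_tsupport (hg : Differentiable ℝ g)
    (hφ : ∀ x ∈ tsupport g, HasDerivAt φ (φ' x) x) (x : ℝ) :
    HasDerivAt (fun y ↦ φ y * ‖g y‖ ^ 2)
      (φ' x * ‖g x‖ ^ 2 + φ x * (2 * ⟪g x, deriv g x⟫)) x := by
  by_cases hx : x ∈ tsupport g
  · exact (hφ x hx).mul (hg x).hasDerivAt.norm_sq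
  · have locally_zero : (fun y ↦ φ y * ‖g y‖ ^ 2) =ᶠ[nhds x] fun _ ↦ 0 := by
      filter_upwards [notMem_tsupport_iff_eventuallyEq.1 hx] with y hy
      simp [hy]
    simpa [image_eq_zero_of_notMem_tsupport hx] using
      (hasDerivAt_const x (0 : ℝ)).congr_of_eventuallyEq locally_zero

theorem integrable_mul_norm_sq_add_mul_inner_deriv (hg : ContDiff ℝ 1 g) (hgc : HasCompactSupport g)
    (hφ : ContinuousOn φ (tsupport g)) (hφ' : ContinuousOn φ' (tsupport g)) :
    Integrable fun x ↦ φ' x * ‖g x‖ ^ 2 + φ x * (2 * ⟪g x, deriv g x⟫) := by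
  have inner_continuous : Continuous fun x ↦ 2 * ⟪g x, deriv g x⟫ :=
    continuous_const.mul (hg.continuous.inner (hg.continuous_deriv le_rfl))
  refine (integrable_mul_norm_sq_of_continuousOn_tsupport hg.continuous hgc hφ').add <|
    integrable_of_continuousOn_of_support_subset hgc (hφ.mul inner_continuous.continuousOn)
      fun x hx ↦ ?_
  exact subset_tsupport g fun h ↦ hx (by simp [h])

theorem setIntegral_deriv_mul_norm_sq_eq_zero {Ω : Set ℝ} (hg : ContDiff ℝ 1 g)
    (hgc : HasCompactSupport g) (hgΩ : tsupport g ⊆ Ω)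
    (hφ : ∀ x ∈ tsupport g, HasDerivAt φ (φ' x) x) (hφ' : ContinuousOn φ' (tsupport g)) :
    ∫ x in Ω, (φ' x * ‖g x‖ ^ 2 + φ x * (2 * ⟪g x, deriv g x⟫)) = 0 := by
  have hφ_cont : ContinuousOn φ (tsupport g) := HasDerivAt.continuousOn hφ
  rw [setIntegral_eq_integral_of_forall_compl_eq_zero fun x hx ↦ by
    simp [image_eq_zero_of_notMem_tsupport (mt (@hgΩ x) hx)]]
  exact integral_eq_zero_of_hasDerivAt_of_integrable
    (hasDerivAt_mul_norm_sq_of_tsupport (hg.differentiable one_ne_zero) hφ)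
    (integrable_mul_norm_sq_add_mul_inner_deriv hg hgc hφ_cont hφ')
    (integrable_mul_norm_sq_of_continuousOn_tsupport hg.continuous hgc hφ_cont)

theorem setIntegral_neg_riccati_mul_norm_sq_le {p : ℝ → ℝ} {Ω : Set ℝ} (hg : ContDiff ℝ 1 g)
    (hgc : HasCompactSupport g) (hgΩ : tsupport g ⊆ Ω)
    (hp : ContinuousOn p (tsupport g)) (hp_pos : ∀ x ∈ tsupport g, 0 < p x)
    (hφ : ∀ x ∈ tsupport g, HasDerivAt φ (φ' x) x) (hφ' : ContinuousOn φ' (tsupport g)) :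
    ∫ x in Ω, -(φ' x + φ x ^ 2 / p x) * ‖g x‖ ^ 2 ≤ ∫ x in Ω, p x * ‖deriv g x‖ ^ 2 := by
  have hφ_cont : ContinuousOn φ (tsupport g) := HasDerivAt.continuousOn hφ
  have potential_integrable : Integrable fun x ↦ -(φ' x + φ x ^ 2 / p x) * ‖g x‖ ^ 2 :=
    integrable_mul_norm_sq_of_continuousOn_tsupport hg.continuous hgc
      (hφ'.add ((hφ_cont.pow 2).div hp fun x hx ↦ (hp_pos x hx).ne')).neg
  have energy_integrable : Integrable fun x ↦ p x * ‖deriv g x‖ ^ 2 :=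
    integrable_mul_norm_sq_of_continuousOn_tsupport (hg.continuous_deriv le_rfl) hgc.deriv
      (hp.mono tsupport_deriv_subset)
  have total_deriv_integrable := integrable_mul_norm_sq_add_mul_inner_deriv hg hgc hφ_cont hφ'
  have pointwise (x : ℝ) : -(φ' x + φ x ^ 2 / p x) * ‖g x‖ ^ 2
      + (φ' x * ‖g x‖ ^ 2 + φ x * (2 * ⟪g x, deriv g x⟫)) ≤ p x * ‖deriv g x‖ ^ 2 := by
    by_cases hx : x ∈ tsupport g
    · linarith [two_mul_mul_inner_le_div_mul_norm_sq_add (hp_pos x hx) (φ x) (g x) (deriv g x)]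
    · simp [image_eq_zero_of_notMem_tsupport hx, deriv_of_notMem_tsupport hx]
  calc ∫ x in Ω, -(φ' x + φ x ^ 2 / p x) * ‖g x‖ ^ 2
      = ∫ x in Ω, (-(φ' x + φ x ^ 2 / p x) * ‖g x‖ ^ 2
          + (φ' x * ‖g x‖ ^ 2 + φ x * (2 * ⟪g x, deriv g x⟫))) := by
        rw [integral_add potential_integrable.restrict total_deriv_integrable.restrict,
          setIntegral_deriv_mul_norm_sq_eq_zero hg hgc hgΩ hφ hφ', add_zero]
    _ ≤ ∫ x in Ω, p x * ‖deriv g x‖ ^ 2 :=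
        integral_mono (potential_integrable.add total_deriv_integrable).restrict
          energy_integrable.restrict pointwise

end InnerProduct

theorem log_div_ne_zero {r₀ r : ℝ} (hr₀ : 0 < r₀) (hr : 0 < r) (hne : r ≠ r₀) :
    Real.log (r / r₀) ≠ 0 :=
  Real.log_ne_zero_of_pos_of_ne_one (div_pos hr hr₀) (mt (div_eq_one_iff_eq hr₀.ne').1 hne)

theorem hasDerivAt_inv_two_mul_log_div {r₀ r : ℝ} (hlog : Real.log (r / r₀) ≠ 0) :
    HasDerivAt (fun x ↦ (2 * Real.log (x / r₀))⁻¹) (-(2 * r * Real.log (r / r₀) ^ 2)⁻¹) r := by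
  have hdiv : r / r₀ ≠ 0 := (Real.log_ne_zero.1 hlog).1
  obtain ⟨hr, hr₀⟩ := div_ne_zero_iff.1 hdiv
  have hlog_deriv := ((hasDerivAt_id' r).div_const r₀).log hdiv
  refine ((hlog_deriv.const_mul 2).fun_inv (mul_ne_zero two_ne_zero hlog)).congr_deriv ?_
  field_simp

theorem continuousOn_inv_two_mul_log_div_sq {r₀ : ℝ} {s : Set ℝ}
    (hlog : ∀ r ∈ s, Real.log (r / r₀) ≠ 0) :
    ContinuousOn (fun r ↦ (2 * r * Real.log (r / r₀) ^ 2)⁻¹) s := by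
  have hdiv (r) (hr : r ∈ s) : r / r₀ ≠ 0 := (Real.log_ne_zero.1 (hlog r hr)).1
  have hlog_cont : ContinuousOn (fun r ↦ Real.log (r / r₀)) s :=
    (continuousOn_id.div_const r₀).log hdiv
  refine ((continuousOn_const.mul continuousOn_id).mul (hlog_cont.pow 2)).inv₀ fun r hr ↦ ?_
  exact mul_ne_zero (mul_ne_zero two_ne_zero (div_ne_zero_iff.1 (hdiv r hr)).1)
    (pow_ne_zero 2 (hlog r hr))

theorem neg_riccati_inv_two_mul (r l : ℝ) :
    -(-(2 * r * l ^ 2)⁻¹ + (2 * l)⁻¹ ^ 2 / r) = 1 / 4 * (r / (r ^ 2 * l ^ 2)) := by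
  rcases eq_or_ne r 0 with rfl | hr
  · simp
  · field_simp
    ring

theorem one_dim_log_hardy_general {E : Type*} [NormedAddCommGroup E] [InnerProductSpace ℝ E]
    {r₀ : ℝ} (hr₀ : 0 < r₀) {Ω : Set ℝ} (hΩ : Ω ⊆ Ioi 0 \ {r₀})
    {g : ℝ → E} (hg : ContDiff ℝ 1 g) (hgc : HasCompactSupport g) (hgΩ : tsupport g ⊆ Ω) :
    (1 / 4) * ∫ r in Ω, ‖g r‖ ^ 2 / (r ^ 2 * Real.log (r / r₀) ^ 2) * r
      ≤ ∫ r in Ω, ‖deriv g r‖ ^ 2 * r := by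
  have r_pos (r) (hr : r ∈ tsupport g) : 0 < r := (hΩ (hgΩ hr)).1
  have log_ne_zero (r) (hr : r ∈ tsupport g) : Real.log (r / r₀) ≠ 0 :=
    log_div_ne_zero hr₀ (r_pos r hr) (hΩ (hgΩ hr)).2
  have potential_eq (r : ℝ) : 1 / 4 * (‖g r‖ ^ 2 / (r ^ 2 * Real.log (r / r₀) ^ 2) * r) =
      -(-(2 * r * Real.log (r / r₀) ^ 2)⁻¹ + (2 * Real.log (r / r₀))⁻¹ ^ 2 / r) * ‖g r‖ ^ 2 := by
    rw [neg_riccati_inv_two_mul]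
    ring
  rw [← integral_const_mul]
  simp only [potential_eq, mul_comm (‖deriv g _‖ ^ 2)]
  exact setIntegral_neg_riccati_mul_norm_sq_le hg hgc hgΩ continuousOn_id r_pos
    (fun r hr ↦ hasDerivAt_inv_two_mul_log_div (log_ne_zero r hr))
    (continuousOn_inv_two_mul_log_div_sq log_ne_zero).neg

/-- **One-dimensional logarithmic Hardy inequality.**
For `r₀ > 0` and every `C¹` function `g` with compact support in `(r₀,∞)`,
`∫_{r₀}^∞ g'(r)² r dr ≥ (1/4) ∫_{r₀}^∞ g(r)²/(r² log²(r/r₀)) r dr`. -/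
theorem one_dim_log_hardy
    (r₀ : ℝ) (hr₀ : 0 < r₀)
    (g : ℝ → ℝ) (hg : ContDiff ℝ 1 g) (hgc : HasCompactSupport g)
    (hgsupp : tsupport g ⊆ Ioi r₀) :
    ∫ r in Ioi r₀, (deriv g r) ^ 2 * r
      ≥ (1 / 4) * ∫ r in Ioi r₀, (g r) ^ 2 / (r ^ 2 * (Real.log (r / r₀)) ^ 2) * r := by
  have Ioi_avoids : Ioi r₀ ⊆ Ioi 0 \ {r₀} := fun r hr ↦ ⟨hr₀.trans hr, ne_of_gt hr⟩
  simpa only [Real.norm_eq_abs, sq_abs] using one_dim_log_hardy_general hr₀ Ioi_avoids hg hgc hgsupp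
end
end

section
/- Let a ∈ (0,1], let R > 0, set r₀ := R/2, and let ξ : (0,∞) → [0,1] be a smooth function with ξ = 0 on (0,r₀] and ξ = 1 on [R,∞), with bounded derivative. Then for every ψ ∈ C¹_c(U) one has ∫_U |ψ(r,φ)|²/(1 + r² (log(r/r₀))²) r dr dφ ≤ 16 ∫_U |∂_rψ(r,φ)|² r dr dφ + (16 ‖ξ'‖_∞² + 2) ∫_{U_R} |ψ(r,φ)|² r dr dφ, where ‖ξ'‖_∞ := sup_{r>0} |ξ'(r)|. -/
open MeasureTheory Real Set

noncomputable section

/-!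
The cutoff `ξ` turns `ψ` into a function `ξψ` vanishing at `r₀`, to which the one-dimensional
logarithmic Hardy inequality `∫ |g|² / (r² log²(r/r₀)) r dr ≤ 4 ∫ |g'|² r dr` on `(r₀, ∞)` applies
for almost every `φ`. Passing from `ψ` to `ξψ` costs a factor `2` in
`|ψ|² ≤ 2 |ξψ|² + 2 |(1 - ξ)ψ|²` and another in `|(ξψ)'|² ≤ 2 |ξψ'|² + 2 |ξ'ψ|²`, whence
`16 = 2 · 4 · 2`; the terms with `1 - ξ` and `ξ'` live on `r < R`. The Hardy inequality itself
integrates the derivative `2 g g' / log(r/r₀) - |g|² / (r log²(r/r₀))` of `|g|² / log(r/r₀)`, with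
the mixed term absorbed by Cauchy–Schwarz.
-/

section LogHardy

variable {E : Type*} [NormedAddCommGroup E] {g g' : ℝ → E} {c B : ℝ}

lemma hasDerivAt_log_div {r : ℝ} (hr : r ≠ 0) (hc : c ≠ 0) :
    HasDerivAt (fun s => log (s / c)) r⁻¹ r := by
  refine (((hasDerivAt_id r).div_const c).log (div_ne_zero hr hc)).congr_deriv ?_
  simp only [id]
  field_simp

lemma continuousOn_log_div (hc : 0 < c) : ContinuousOn (fun r => log (r / c)) (Ici c) :=
  fun _ hr => (hasDerivAt_log_div (hc.trans_le hr).ne' hc.ne').continuousAt.continuousWithinAt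

lemma log_div_pos {r : ℝ} (hc : 0 < c) (hr : c < r) : 0 < log (r / c) :=
  log_pos ((one_lt_div hc).2 hr)

lemma exists_norm_le_mul_log_div [NormedSpace ℝ E] (hc : 0 < c) (hg : ContinuousOn g (Icc c B))
    (hderiv : ∀ r ∈ Ico c B, HasDerivWithinAt g (g' r) (Ici r) r)
    (hg' : ContinuousOn g' (Icc c B)) (hgc : g c = 0) :
    ∃ C, ∀ r ∈ Icc c B, ‖g r‖ ≤ C * log (r / c) := by
  obtain ⟨K, hK⟩ := isCompact_Icc.exists_bound_of_continuousOn hg'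
  refine ⟨K * B, image_norm_le_of_norm_deriv_right_le_deriv_boundary' hg hderiv
    (by simp [hgc, hc.ne'])
    (((continuousOn_log_div hc).mono Icc_subset_Ici_self).const_mul (K * B))
    (B' := fun r => K * B * r⁻¹) (fun r hr => ?_) (fun r hr => ?_)⟩
  · exact ((hasDerivAt_log_div (hc.trans_le hr.1).ne' hc.ne').const_mul _).hasDerivWithinAt
  · have hr₀ : 0 < r := hc.trans_le hr.1
    have hKr : ‖g' r‖ ≤ K := hK r (Ico_subset_Icc_self hr)
    rw [← div_eq_mul_inv, le_div_iff₀ hr₀]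
    exact mul_le_mul hKr hr.2.le hr₀.le ((norm_nonneg _).trans hKr)

lemma integrableOn_Icc_norm_sq_div_log_sq [NormedSpace ℝ E] (hc : 0 < c)
    (hg : ContinuousOn g (Icc c B))
    (hderiv : ∀ r ∈ Ico c B, HasDerivWithinAt g (g' r) (Ici r) r)
    (hg' : ContinuousOn g' (Icc c B)) (hgc : g c = 0) :
    IntegrableOn (fun r => ‖g r‖ ^ 2 / (r * log (r / c) ^ 2)) (Icc c B) := by
  obtain ⟨C, hC⟩ := exists_norm_le_mul_log_div hc hg hderiv hg' hgc
  have hmeas : AEStronglyMeasurable (fun r => ‖g r‖ ^ 2 / (r * log (r / c) ^ 2))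
      (volume.restrict (Icc c B)) := by
    have hg_meas := (hg.norm.aestronglyMeasurable (μ := volume) measurableSet_Icc).aemeasurable
    exact AEMeasurable.aestronglyMeasurable (by fun_prop)
  refine Integrable.of_bound hmeas (C ^ 2 / c) ((ae_restrict_mem measurableSet_Icc).mono ?_)
  intro r hr
  have hr₀ : 0 < r := hc.trans_le hr.1
  rw [norm_of_nonneg (by positivity)]
  rcases hr.1.eq_or_lt with rfl | hcr
  · simpa [hgc] using div_nonneg (sq_nonneg C) hr₀.le
  · have hlog := log_div_pos hc hcr
    calc ‖g r‖ ^ 2 / (r * log (r / c) ^ 2)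
        ≤ (C * log (r / c)) ^ 2 / (r * log (r / c) ^ 2) := by gcongr; exact hC r hr
      _ = C ^ 2 / r := by field_simp
      _ ≤ C ^ 2 / c := by gcongr

-- At `r = c` the quotient is `0 / 0 = 0`, which is also its limit.
lemma continuousOn_norm_sq_div_log [NormedSpace ℝ E] (hc : 0 < c) (hg : ContinuousOn g (Icc c B))
    (hderiv : ∀ r ∈ Ico c B, HasDerivWithinAt g (g' r) (Ici r) r)
    (hg' : ContinuousOn g' (Icc c B)) (hgc : g c = 0) :
    ContinuousOn (fun r => ‖g r‖ ^ 2 / log (r / c)) (Icc c B) := by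
  obtain ⟨C, hC⟩ := exists_norm_le_mul_log_div hc hg hderiv hg' hgc
  have hlog : ContinuousOn (fun r => log (r / c)) (Icc c B) :=
    (continuousOn_log_div hc).mono Icc_subset_Ici_self
  intro r hr
  rcases hr.1.eq_or_lt with rfl | hcr
  · have hbound : ∀ s ∈ Icc c B, ‖g s‖ ^ 2 / log (s / c) ≤ C ^ 2 * log (s / c) := by
      intro s hs
      rcases hs.1.eq_or_lt with rfl | hcs
      · simp [hgc, hc.ne']
      · have hpos := log_div_pos hc hcs
        rw [div_le_iff₀ hpos]
        calc ‖g s‖ ^ 2 ≤ (C * log (s / c)) ^ 2 := by gcongr; exact hC s hs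
          _ = C ^ 2 * log (s / c) * log (s / c) := by ring
    have hlim : Filter.Tendsto (fun s => C ^ 2 * log (s / c)) (nhdsWithin c (Icc c B))
        (nhds 0) := by
      simpa [hc.ne'] using ((hlog.const_mul (C ^ 2)) c hr).tendsto
    have hnonneg : ∀ s ∈ Icc c B, 0 ≤ ‖g s‖ ^ 2 / log (s / c) := fun s hs =>
      div_nonneg (sq_nonneg _) (log_nonneg ((one_le_div hc).2 hs.1))
    simpa [ContinuousWithinAt, hgc] using squeeze_zero'
      (Filter.eventually_of_mem self_mem_nhdsWithin hnonneg)
      (Filter.eventually_of_mem self_mem_nhdsWithin hbound) hlim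
  · exact ((hg r hr).norm.pow 2).div (hlog r hr) (log_div_pos hc hcr).ne'

variable [InnerProductSpace ℝ E]

lemma four_mul_inner_div_le (v w : E) {r L : ℝ} (hr : 0 < r) :
    4 * (inner ℝ v w / L) ≤ 4 * (‖w‖ ^ 2 * r) + ‖v‖ ^ 2 / (r * L ^ 2) := by
  rcases eq_or_ne L 0 with rfl | hL
  · simpa using by positivity
  have hsq : 0 ≤ r * ‖(2 : ℝ) • w - (r * L)⁻¹ • v‖ ^ 2 := by positivity
  have hexpand : r * ‖(2 : ℝ) • w - (r * L)⁻¹ • v‖ ^ 2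
      = 4 * (‖w‖ ^ 2 * r) + ‖v‖ ^ 2 / (r * L ^ 2) - 4 * (inner ℝ v w / L) := by
    rw [norm_sub_sq_real, norm_smul, norm_smul, real_inner_smul_left, real_inner_smul_right,
      real_inner_comm w v, mul_pow, mul_pow, norm_eq_abs, norm_eq_abs, sq_abs, sq_abs]
    field_simp
    ring
  linarith

theorem intervalIntegral_log_hardy (hc : 0 < c) (hcB : c ≤ B) (hg : ContinuousOn g (Icc c B))
    (hderiv : ∀ r ∈ Ico c B, HasDerivWithinAt g (g' r) (Ici r) r)
    (hg' : ContinuousOn g' (Icc c B)) (hgc : g c = 0) :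
    ∫ r in c..B, ‖g r‖ ^ 2 / (r * log (r / c) ^ 2) ≤ 4 * ∫ r in c..B, ‖g' r‖ ^ 2 * r := by
  have hW := integrableOn_Icc_norm_sq_div_log_sq hc hg hderiv hg' hgc
  have hG : IntegrableOn (fun r => 4 * (‖g' r‖ ^ 2 * r)) (Icc c B) :=
    (((hg'.norm.pow 2).mul continuousOn_id).const_mul 4).integrableOn_Icc
  have hFTC := intervalIntegral.sub_le_integral_of_hasDeriv_right_of_le hcB
    ((continuousOn_norm_sq_div_log hc hg hderiv hg' hgc).const_mul 2)
    (g' := fun r => 2 * ((2 * inner ℝ (g r) (g' r) * log (r / c) - ‖g r‖ ^ 2 * r⁻¹)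
      / log (r / c) ^ 2)) (fun r hr => ?_) (hG.sub hW) (fun r hr => ?_)
  · have hend : 0 ≤ ‖g B‖ ^ 2 / log (B / c) :=
      div_nonneg (sq_nonneg _) (log_nonneg ((one_le_div hc).2 hcB))
    simp only [Pi.sub_apply] at hFTC
    rw [intervalIntegral.integral_sub
      ((intervalIntegrable_iff_integrableOn_Icc_of_le hcB).2 hG)
      ((intervalIntegrable_iff_integrableOn_Icc_of_le hcB).2 hW),
      intervalIntegral.integral_const_mul] at hFTC
    simp only [hgc, norm_zero, ne_eq, OfNat.ofNat_ne_zero, not_false_eq_true, zero_pow, zero_div,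
      mul_zero, sub_zero] at hFTC
    linarith
  · have hr₀ : 0 < r := hc.trans hr.1
    exact ((((hderiv r (Ioo_subset_Ico_self hr)).mono Ioi_subset_Ici_self).norm_sq).div
      (hasDerivAt_log_div hr₀.ne' hc.ne').hasDerivWithinAt (log_div_pos hc hr.1).ne').const_mul 2
  · have hr₀ : 0 < r := hc.trans hr.1
    have hlog := log_div_pos hc hr.1
    have hAMGM := four_mul_inner_div_le (g r) (g' r) (L := log (r / c)) hr₀
    have hsplit : 2 * ((2 * inner ℝ (g r) (g' r) * log (r / c) - ‖g r‖ ^ 2 * r⁻¹)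
        / log (r / c) ^ 2) = 4 * (inner ℝ (g r) (g' r) / log (r / c))
          - 2 * (‖g r‖ ^ 2 / (r * log (r / c) ^ 2)) := by
      field_simp
      ring
    simp only [Pi.sub_apply]
    linarith

theorem log_hardy (hc : 0 < c) (hg : ContinuousOn g (Ici c))
    (hderiv : ∀ r ∈ Ici c, HasDerivWithinAt g (g' r) (Ici r) r)
    (hg' : ContinuousOn g' (Ici c)) (hgc : g c = 0)
    (hint : IntegrableOn (fun r => ‖g' r‖ ^ 2 * r) (Ioi c)) :
    IntegrableOn (fun r => ‖g r‖ ^ 2 / (r * log (r / c) ^ 2)) (Ioi c) ∧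
      ∫ r in Ioi c, ‖g r‖ ^ 2 / (r * log (r / c) ^ 2) ≤ 4 * ∫ r in Ioi c, ‖g' r‖ ^ 2 * r := by
  have hloc : ∀ B, IntegrableOn (fun r => ‖g r‖ ^ 2 / (r * log (r / c) ^ 2)) (Ioc c B) := fun B =>
    (integrableOn_Icc_norm_sq_div_log_sq hc (hg.mono Icc_subset_Ici_self)
      (fun r hr => hderiv r hr.1) (hg'.mono Icc_subset_Ici_self) hgc).mono_set Ioc_subset_Icc_self
  have hbound : ∀ B ≥ c, ∫ r in c..B, ‖g r‖ ^ 2 / (r * log (r / c) ^ 2)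
      ≤ 4 * ∫ r in Ioi c, ‖g' r‖ ^ 2 * r := fun B hB => by
    refine (intervalIntegral_log_hardy hc hB (hg.mono Icc_subset_Ici_self)
      (fun r hr => hderiv r hr.1) (hg'.mono Icc_subset_Ici_self) hgc).trans ?_
    rw [intervalIntegral.integral_of_le hB]
    gcongr 4 * ?_
    exact setIntegral_mono_set hint ((ae_restrict_mem measurableSet_Ioi).mono fun r hr =>
      mul_nonneg (sq_nonneg _) (hc.trans hr).le) Ioc_subset_Ioi_self.eventuallyLE
  have hintW : IntegrableOn (fun r => ‖g r‖ ^ 2 / (r * log (r / c) ^ 2)) (Ioi c) := by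
    refine integrableOn_Ioi_of_intervalIntegral_norm_bounded
      (4 * ∫ r in Ioi c, ‖g' r‖ ^ 2 * r) c hloc Filter.tendsto_id ?_
    filter_upwards [Filter.eventually_ge_atTop c] with B hB
    refine (intervalIntegral.integral_congr fun r hr => ?_).trans_le (hbound B hB)
    have hr₀ : 0 ≤ r := hc.le.trans (uIcc_of_le hB ▸ hr).1
    exact norm_of_nonneg (by positivity)
  exact ⟨hintW, le_of_tendsto (intervalIntegral_tendsto_integral_Ioi c hintW Filter.tendsto_id)
    (Filter.eventually_atTop.2 ⟨c, hbound⟩)⟩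

end LogHardy

lemma integrable_div_one_add_mul {X : Type*} [MeasurableSpace X] {μ : Measure X} {u v w : X → ℝ}
    (hw : Measurable w) (hw₀ : ∀ x, 0 ≤ w x) (h : Integrable (fun x => u x * v x) μ) :
    Integrable (fun x => u x / (1 + w x) * v x) μ := by
  have hbdd := h.mul_bdd (c := 1) (g := fun x => (1 + w x)⁻¹) (by fun_prop) (.of_forall fun x => ?_)
  · exact hbdd.congr (.of_forall fun x => by ring)
  · have := hw₀ x
    rw [norm_of_nonneg (by positivity)]
    exact inv_le_one_of_one_le₀ (le_add_of_nonneg_right this)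

lemma integral_Ioi_indicator_Ioo {R : ℝ} (h : ℝ → ℝ) :
    ∫ r in Ioi 0, (Ioo 0 R).indicator h r = ∫ r in Ioo 0 R, h r := by
  rw [setIntegral_indicator measurableSet_Ioo, inter_eq_self_of_subset_right Ioo_subset_Ioi_self]

lemma div_one_add_sq_mul_sq_mul_le {x r L : ℝ} (hx : 0 ≤ x) (hr : 0 < r) (hL : L ≠ 0) :
    x / (1 + r ^ 2 * L ^ 2) * r ≤ x / (r * L ^ 2) := by
  rw [div_mul_eq_mul_div, div_le_div_iff₀ (by positivity) (by positivity)]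
  linarith

/-- `ξ` is a `C¹` radial cutoff with values in `[0, 1]`, rising from `0` at `r₀` to `1` on `[R, ∞)`
with slope at most `M`. Its values on `(0, r₀)` are left free: it multiplies functions to which the
logarithmic Hardy inequality on `(r₀, ∞)` is then applied. -/
structure IsRadialCutoff (r₀ R M : ℝ) (ξ : ℝ → ℝ) : Prop where
  contDiffOn : ContDiffOn ℝ 1 ξ (Ioi 0)
  mem_Icc : ∀ r ∈ Ioi r₀, ξ r ∈ Icc 0 1
  apply_eq_zero : ξ r₀ = 0
  eq_one : ∀ r ∈ Ici R, ξ r = 1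
  abs_deriv_le : ∀ r ∈ Ioi r₀, |deriv ξ r| ≤ M

namespace IsRadialCutoff

variable {E : Type*} [NormedAddCommGroup E] [NormedSpace ℝ E] {r₀ R M : ℝ} {ξ : ℝ → ℝ}
  {f f' : ℝ → E}

lemma lt (hξ : IsRadialCutoff r₀ R M ξ) : r₀ < R := by
  by_contra! hle
  exact zero_ne_one (hξ.apply_eq_zero.symm.trans (hξ.eq_one r₀ hle))

lemma hasDerivAt (hξ : IsRadialCutoff r₀ R M ξ) {r : ℝ} (hr : 0 < r) :
    HasDerivAt ξ (deriv ξ r) r :=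
  ((hξ.contDiffOn.differentiableOn one_ne_zero).differentiableAt (Ioi_mem_nhds hr)).hasDerivAt

lemma continuousOn_deriv (hξ : IsRadialCutoff r₀ R M ξ) : ContinuousOn (deriv ξ) (Ioi 0) :=
  hξ.contDiffOn.continuousOn_deriv_of_isOpen isOpen_Ioi le_rfl

lemma deriv_eq_zero (hξ : IsRadialCutoff r₀ R M ξ) {r : ℝ} (hr : R ≤ r) : deriv ξ r = 0 := by
  refine IsLocalMax.deriv_eq_zero ?_
  filter_upwards [Ioi_mem_nhds (hξ.lt.trans_le hr)] with s hs
  exact (hξ.mem_Icc s hs).2.trans_eq (hξ.eq_one r hr).symm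

lemma norm_sq_smul_add_deriv_smul_mul_le (hξ : IsRadialCutoff r₀ R M ξ)
    (hr₀ : 0 < r₀) {r : ℝ} (hr : r ∈ Ioi r₀) :
    ‖ξ r • f' r + deriv ξ r • f r‖ ^ 2 * r
      ≤ 2 * (‖f' r‖ ^ 2 * r) + 2 * M ^ 2 * (Ioo 0 R).indicator (fun s => ‖f s‖ ^ 2 * s) r := by
  have hrpos : 0 < r := hr₀.trans hr
  obtain ⟨hξ0, hξ1⟩ := hξ.mem_Icc r hr
  have hsum : ‖ξ r • f' r + deriv ξ r • f r‖ ^ 2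
      ≤ 2 * (ξ r ^ 2 * ‖f' r‖ ^ 2 + deriv ξ r ^ 2 * ‖f r‖ ^ 2) :=
    calc ‖ξ r • f' r + deriv ξ r • f r‖ ^ 2 ≤ (‖ξ r • f' r‖ + ‖deriv ξ r • f r‖) ^ 2 := by
          gcongr; exact norm_add_le _ _
      _ ≤ 2 * (‖ξ r • f' r‖ ^ 2 + ‖deriv ξ r • f r‖ ^ 2) := add_sq_le
      _ = _ := by simp only [norm_smul, mul_pow, norm_eq_abs, sq_abs]
  have hderiv : deriv ξ r ^ 2 * (‖f r‖ ^ 2 * r)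
      ≤ M ^ 2 * (Ioo 0 R).indicator (fun s => ‖f s‖ ^ 2 * s) r := by
    rcases lt_or_ge r R with hrR | hrR
    · rw [indicator_of_mem (show r ∈ Ioo 0 R from ⟨hrpos, hrR⟩)]
      have hM : deriv ξ r ^ 2 ≤ M ^ 2 := sq_le_sq.2 ((hξ.abs_deriv_le r hr).trans (le_abs_self M))
      gcongr
    · rw [indicator_of_notMem fun h => h.2.not_ge hrR, hξ.deriv_eq_zero hrR]
      simp
  calc ‖ξ r • f' r + deriv ξ r • f r‖ ^ 2 * r
      ≤ 2 * (ξ r ^ 2 * ‖f' r‖ ^ 2 + deriv ξ r ^ 2 * ‖f r‖ ^ 2) * r := by gcongr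
    _ = 2 * (ξ r ^ 2 * (‖f' r‖ ^ 2 * r)) + 2 * (deriv ξ r ^ 2 * (‖f r‖ ^ 2 * r)) := by ring
    _ ≤ 2 * (1 * (‖f' r‖ ^ 2 * r))
        + 2 * (M ^ 2 * (Ioo 0 R).indicator (fun s => ‖f s‖ ^ 2 * s) r) := by
      gcongr
      exact pow_le_one₀ hξ0 hξ1
    _ = _ := by ring

lemma norm_sq_div_one_add_mul_le (hξ : IsRadialCutoff r₀ R M ξ)
    (hr₀ : 0 < r₀) {r : ℝ} (hr : r ∈ Ioi 0) :
    ‖f r‖ ^ 2 / (1 + r ^ 2 * log (r / r₀) ^ 2) * r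
      ≤ 2 * (Ioi r₀).indicator (fun s => ‖ξ s • f s‖ ^ 2 / (s * log (s / r₀) ^ 2)) r
        + 2 * (Ioo 0 R).indicator (fun s => ‖f s‖ ^ 2 * s) r := by
  have hrpos : 0 < r := hr
  have hle : ‖f r‖ ^ 2 / (1 + r ^ 2 * log (r / r₀) ^ 2) * r ≤ ‖f r‖ ^ 2 * r := by
    gcongr
    exact div_le_self (by positivity) (le_add_of_nonneg_right (by positivity))
  rcases le_or_gt r r₀ with hrr₀ | hrr₀
  · rw [indicator_of_notMem (notMem_Ioi.2 hrr₀),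
      indicator_of_mem (show r ∈ Ioo 0 R from ⟨hrpos, hrr₀.trans_lt hξ.lt⟩)]
    have : 0 ≤ ‖f r‖ ^ 2 * r := by positivity
    linarith
  rw [indicator_of_mem (mem_Ioi.2 hrr₀)]
  obtain ⟨hξ0, hξ1⟩ := hξ.mem_Icc r hrr₀
  have hsplit : ‖f r‖ ^ 2 ≤ 2 * (‖ξ r • f r‖ ^ 2 + (1 - ξ r) ^ 2 * ‖f r‖ ^ 2) := by
    rw [norm_smul, mul_pow, norm_eq_abs, sq_abs]
    linarith [mul_nonneg (sq_nonneg (2 * ξ r - 1)) (sq_nonneg ‖f r‖)]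
  have hcompl : (1 - ξ r) ^ 2 * (‖f r‖ ^ 2 * r)
      ≤ (Ioo 0 R).indicator (fun s => ‖f s‖ ^ 2 * s) r := by
    rcases lt_or_ge r R with hrR | hrR
    · rw [indicator_of_mem (show r ∈ Ioo 0 R from ⟨hrpos, hrR⟩)]
      exact mul_le_of_le_one_left (by positivity) (pow_le_one₀ (by linarith) (by linarith))
    · rw [indicator_of_notMem fun h => h.2.not_ge hrR, hξ.eq_one r hrR]
      simp
  calc ‖f r‖ ^ 2 / (1 + r ^ 2 * log (r / r₀) ^ 2) * r
      ≤ 2 * (‖ξ r • f r‖ ^ 2 + (1 - ξ r) ^ 2 * ‖f r‖ ^ 2)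
          / (1 + r ^ 2 * log (r / r₀) ^ 2) * r := by gcongr
    _ = 2 * (‖ξ r • f r‖ ^ 2 / (1 + r ^ 2 * log (r / r₀) ^ 2) * r)
          + 2 * ((1 - ξ r) ^ 2 * (‖f r‖ ^ 2 / (1 + r ^ 2 * log (r / r₀) ^ 2) * r)) := by ring
    _ ≤ 2 * (‖ξ r • f r‖ ^ 2 / (r * log (r / r₀) ^ 2))
          + 2 * ((1 - ξ r) ^ 2 * (‖f r‖ ^ 2 * r)) := by
      gcongr 2 * ?_ + 2 * (_ * ?_)
      exact div_one_add_sq_mul_sq_mul_le (sq_nonneg _) hrpos (log_div_pos hr₀ hrr₀).ne'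
    _ ≤ _ := by gcongr

lemma integral_norm_sq_smul_add_deriv_smul_mul_le (hξ : IsRadialCutoff r₀ R M ξ) (hr₀ : 0 < r₀)
    (hf : ContinuousOn f (Ioi 0)) (hf' : ContinuousOn f' (Ioi 0))
    (hint : IntegrableOn (fun r => ‖f r‖ ^ 2 * r) (Ioo 0 R))
    (hint' : IntegrableOn (fun r => ‖f' r‖ ^ 2 * r) (Ioi 0)) :
    IntegrableOn (fun r => ‖ξ r • f' r + deriv ξ r • f r‖ ^ 2 * r) (Ioi r₀) ∧
      ∫ r in Ioi r₀, ‖ξ r • f' r + deriv ξ r • f r‖ ^ 2 * r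
        ≤ 2 * (∫ r in Ioi 0, ‖f' r‖ ^ 2 * r) + 2 * M ^ 2 * ∫ r in Ioo 0 R, ‖f r‖ ^ 2 * r := by
  set ind := (Ioo 0 R).indicator fun r => ‖f r‖ ^ 2 * r
  have hind : IntegrableOn ind (Ioi 0) := (hint.integrable_indicator measurableSet_Ioo).integrableOn
  have hsub : Ioi r₀ ⊆ Ioi 0 := Ioi_subset_Ioi hr₀.le
  have hdom : IntegrableOn (fun r => 2 * (‖f' r‖ ^ 2 * r) + 2 * M ^ 2 * ind r) (Ioi 0) :=
    (hint'.const_mul 2).add (hind.const_mul _)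
  have hcont : ContinuousOn (fun r => ‖ξ r • f' r + deriv ξ r • f r‖ ^ 2 * r) (Ioi r₀) :=
    (((((hξ.contDiffOn.continuousOn.smul hf').add (hξ.continuousOn_deriv.smul hf)).norm.pow 2).mul
      continuousOn_id).mono hsub)
  have hle : ∀ r ∈ Ioi r₀, ‖ξ r • f' r + deriv ξ r • f r‖ ^ 2 * r
      ≤ 2 * (‖f' r‖ ^ 2 * r) + 2 * M ^ 2 * ind r := fun r hr =>
    hξ.norm_sq_smul_add_deriv_smul_mul_le hr₀ hr
  have hleft : IntegrableOn (fun r => ‖ξ r • f' r + deriv ξ r • f r‖ ^ 2 * r) (Ioi r₀) := by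
    refine (hdom.mono_set hsub).mono' (hcont.aestronglyMeasurable measurableSet_Ioi)
      ((ae_restrict_mem measurableSet_Ioi).mono fun r hr => ?_)
    rw [norm_of_nonneg (mul_nonneg (sq_nonneg _) (hsub hr).le)]
    exact hle r hr
  refine ⟨hleft, ?_⟩
  calc ∫ r in Ioi r₀, ‖ξ r • f' r + deriv ξ r • f r‖ ^ 2 * r
      ≤ ∫ r in Ioi r₀, (2 * (‖f' r‖ ^ 2 * r) + 2 * M ^ 2 * ind r) :=
        setIntegral_mono_on hleft (hdom.mono_set hsub) measurableSet_Ioi hle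
    _ ≤ ∫ r in Ioi 0, (2 * (‖f' r‖ ^ 2 * r) + 2 * M ^ 2 * ind r) := by
        refine setIntegral_mono_set hdom ?_ hsub.eventuallyLE
        filter_upwards [ae_restrict_mem measurableSet_Ioi] with r (hr : 0 < r)
        have : 0 ≤ ind r := indicator_nonneg (fun s hs => mul_nonneg (sq_nonneg _) hs.1.le) r
        simp only [Pi.zero_apply]
        positivity
    _ = _ := by
        rw [integral_add (hint'.const_mul 2) (hind.const_mul _), integral_const_mul,
          integral_const_mul, integral_Ioi_indicator_Ioo]

lemma integral_norm_sq_div_one_add_mul_le (hξ : IsRadialCutoff r₀ R M ξ) (hr₀ : 0 < r₀)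
    (hint_cutoff : IntegrableOn (fun r => ‖ξ r • f r‖ ^ 2 / (r * log (r / r₀) ^ 2)) (Ioi r₀))
    (hint : IntegrableOn (fun r => ‖f r‖ ^ 2 * r) (Ioo 0 R)) :
    ∫ r in Ioi 0, ‖f r‖ ^ 2 / (1 + r ^ 2 * log (r / r₀) ^ 2) * r
      ≤ 2 * (∫ r in Ioi r₀, ‖ξ r • f r‖ ^ 2 / (r * log (r / r₀) ^ 2))
        + 2 * ∫ r in Ioo 0 R, ‖f r‖ ^ 2 * r := by
  set W := fun r => ‖ξ r • f r‖ ^ 2 / (r * log (r / r₀) ^ 2)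
  set F := fun r => ‖f r‖ ^ 2 * r
  have hW : IntegrableOn ((Ioi r₀).indicator W) (Ioi 0) :=
    (hint_cutoff.integrable_indicator measurableSet_Ioi).integrableOn
  have hF : IntegrableOn ((Ioo 0 R).indicator F) (Ioi 0) :=
    (hint.integrable_indicator measurableSet_Ioo).integrableOn
  calc ∫ r in Ioi 0, ‖f r‖ ^ 2 / (1 + r ^ 2 * log (r / r₀) ^ 2) * r
      ≤ ∫ r in Ioi 0, (2 * (Ioi r₀).indicator W r + 2 * (Ioo 0 R).indicator F r) := by
        refine integral_mono_of_nonneg ?_ ((hW.const_mul 2).add (hF.const_mul 2)) ?_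
        · filter_upwards [ae_restrict_mem measurableSet_Ioi] with r (hr : 0 < r)
          simp only [Pi.zero_apply]
          positivity
        · filter_upwards [ae_restrict_mem measurableSet_Ioi] with r hr using
            hξ.norm_sq_div_one_add_mul_le hr₀ hr
    _ = _ := by
        rw [integral_add (hW.const_mul 2) (hF.const_mul 2), integral_const_mul,
          integral_const_mul, setIntegral_indicator measurableSet_Ioi,
          inter_eq_self_of_subset_right (Ioi_subset_Ioi hr₀.le), integral_Ioi_indicator_Ioo]

end IsRadialCutoff

section Smearing

variable {E : Type*} [NormedAddCommGroup E] [InnerProductSpace ℝ E] {r₀ R M : ℝ} {ξ : ℝ → ℝ}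

theorem cutoff_smearing_radial {f f' : ℝ → E} (hr₀ : 0 < r₀) (hξ : IsRadialCutoff r₀ R M ξ)
    (hf : ∀ r ∈ Ioi 0, HasDerivAt f (f' r) r) (hf' : ContinuousOn f' (Ioi 0))
    (hint : IntegrableOn (fun r => ‖f r‖ ^ 2 * r) (Ioo 0 R))
    (hint' : IntegrableOn (fun r => ‖f' r‖ ^ 2 * r) (Ioi 0)) :
    ∫ r in Ioi 0, ‖f r‖ ^ 2 / (1 + r ^ 2 * log (r / r₀) ^ 2) * r
      ≤ 16 * (∫ r in Ioi 0, ‖f' r‖ ^ 2 * r)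
        + (16 * M ^ 2 + 2) * ∫ r in Ioo 0 R, ‖f r‖ ^ 2 * r := by
  have hsub : Ici r₀ ⊆ Ioi 0 := Ici_subset_Ioi.2 hr₀
  have hfc : ContinuousOn f (Ioi 0) := fun r hr => (hf r hr).continuousAt.continuousWithinAt
  have hderiv : ∀ r ∈ Ioi 0,
      HasDerivAt (fun s => ξ s • f s) (ξ r • f' r + deriv ξ r • f r) r := fun r hr =>
    (hξ.hasDerivAt hr).smul (hf r hr)
  obtain ⟨hgrad_int, hgrad⟩ :=
    hξ.integral_norm_sq_smul_add_deriv_smul_mul_le hr₀ hfc hf' hint hint'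
  obtain ⟨hhardy_int, hhardy⟩ := log_hardy (g := fun r => ξ r • f r) hr₀
    ((hξ.contDiffOn.continuousOn.smul hfc).mono hsub)
    (fun r hr => (hderiv r (hsub hr)).hasDerivWithinAt)
    (((hξ.contDiffOn.continuousOn.smul hf').add (hξ.continuousOn_deriv.smul hfc)).mono hsub)
    (by simp [hξ.apply_eq_zero]) hgrad_int
  have hsmear := hξ.integral_norm_sq_div_one_add_mul_le hr₀ hhardy_int hint
  linarith

variable {Y : Type*} [MeasurableSpace Y] {ν : Measure Y} [SFinite ν] {ψ ψ' : ℝ × Y → E}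

theorem cutoff_smearing_general (hr₀ : 0 < r₀) (hξ : IsRadialCutoff r₀ R M ξ)
    (hψ : ∀ᵐ y ∂ν, ∀ r ∈ Ioi 0, HasDerivAt (fun s => ψ (s, y)) (ψ' (r, y)) r)
    (hψ' : ∀ᵐ y ∂ν, ContinuousOn (fun r => ψ' (r, y)) (Ioi 0))
    (hint : Integrable (fun p => ‖ψ p‖ ^ 2 * p.1) ((volume.restrict (Ioi 0)).prod ν))
    (hint' : Integrable (fun p => ‖ψ' p‖ ^ 2 * p.1) ((volume.restrict (Ioi 0)).prod ν)) :
    ∫ p, ‖ψ p‖ ^ 2 / (1 + p.1 ^ 2 * log (p.1 / r₀) ^ 2) * p.1 ∂(volume.restrict (Ioi 0)).prod ν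
      ≤ 16 * (∫ p, ‖ψ' p‖ ^ 2 * p.1 ∂(volume.restrict (Ioi 0)).prod ν)
        + (16 * M ^ 2 + 2) * ∫ p, ‖ψ p‖ ^ 2 * p.1 ∂(volume.restrict (Ioo 0 R)).prod ν := by
  have hintR : Integrable (fun p => ‖ψ p‖ ^ 2 * p.1) ((volume.restrict (Ioo 0 R)).prod ν) :=
    hint.mono_measure (Measure.prod_mono (Measure.restrict_mono_set _ Ioo_subset_Ioi_self) le_rfl)
  have hleft := integrable_div_one_add_mul (w := fun p : ℝ × Y => p.1 ^ 2 * log (p.1 / r₀) ^ 2)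
    (by fun_prop) (fun p => by positivity) hint
  have hgrad := hint'.integral_prod_right.const_mul 16
  have hcore := hintR.integral_prod_right.const_mul (16 * M ^ 2 + 2)
  rw [integral_prod_symm _ hleft, integral_prod_symm _ hint', integral_prod_symm _ hintR,
    ← integral_const_mul, ← integral_const_mul, ← integral_add hgrad hcore]
  refine integral_mono_ae hleft.integral_prod_right (hgrad.add hcore) ?_
  filter_upwards [hψ, hψ', hintR.prod_left_ae, hint'.prod_left_ae] with y hy hy' hyR hyint'
  exact cutoff_smearing_radial hr₀ hξ hy hy' hyR hyint'

end Smearing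

lemma integrable_norm_sq_mul_of_hasCompactSupport {X E : Type*} [TopologicalSpace X]
    [MeasurableSpace X] [OpensMeasurableSpace X] {μ : Measure X} [IsFiniteMeasureOnCompacts μ]
    [NormedAddCommGroup E] {F : X → E} {v : X → ℝ}
    (hF : Continuous F) (hsupp : HasCompactSupport F) (hv : Continuous v) :
    Integrable (fun x => ‖F x‖ ^ 2 * v x) μ :=
  have hsq : HasCompactSupport fun x => ‖F x‖ ^ 2 :=
    hsupp.comp_left (g := fun z : E => ‖z‖ ^ 2) (by simp)
  Continuous.integrable_of_hasCompactSupport (by fun_prop) hsq.mul_right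

lemma hasDerivAt_prodMk_left_slice {E F : Type*} [NormedAddCommGroup E] [NormedSpace ℝ E]
    [NormedAddCommGroup F] [NormedSpace ℝ F] {ψ : ℝ × F → E} {r : ℝ} {y : F}
    (hψ : DifferentiableAt ℝ ψ (r, y)) :
    HasDerivAt (fun s => ψ (s, y)) (fderiv ℝ ψ (r, y) (1, 0)) r :=
  hψ.hasFDerivAt.comp_hasDerivAt r ((hasDerivAt_id r).prodMk (hasDerivAt_const r y))

/-- **Cutoff smearing estimate for the logarithmic Hardy weight.**
With `r₀ = R/2` and a smooth cutoff `ξ : (0,∞) → [0,1]` vanishing on `(0,r₀]`, equal to `1`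
on `[R,∞)` and with derivative bounded by `M`, every `ψ ∈ C¹_c(U)` satisfies
`∫_U ψ²/(1 + r² log²(r/r₀)) r dr dφ
  ≤ 16 ∫_U |∂_rψ|² r dr dφ + (16 M² + 2) ∫_{U_R} ψ² r dr dφ`. -/
theorem cutoff_smearing
    (a : ℝ) (ha : a ∈ Ioc (0:ℝ) 1) (R : ℝ) (hR : 0 < R)
    (ξ : ℝ → ℝ) (hξ : ContDiffOn ℝ (⊤ : ℕ∞) ξ (Ioi 0))
    (hrange : ∀ r ∈ Ioi (0:ℝ), ξ r ∈ Icc (0:ℝ) 1)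
    (hzero : ∀ r ∈ Ioc (0:ℝ) (R / 2), ξ r = 0)
    (hone : ∀ r ∈ Ici R, ξ r = 1)
    (M : ℝ) (hM : ∀ r ∈ Ioi (0:ℝ), |deriv ξ r| ≤ M) :
    ∀ ψ : ℝ × ℝ → ℝ,
      ContDiff ℝ 1 ψ → HasCompactSupport ψ → tsupport ψ ⊆ wedgeU a →
      ∫ p in wedgeU a, (ψ p) ^ 2 / (1 + p.1 ^ 2 * (Real.log (p.1 / (R / 2))) ^ 2) * p.1
        ≤ 16 * (∫ p in wedgeU a, (fderiv ℝ ψ p (1, 0)) ^ 2 * p.1)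
          + (16 * M ^ 2 + 2) * ∫ p in wedgeUR a R, (ψ p) ^ 2 * p.1 := by
  intro ψ hψ hsupp _
  have hcutoff : IsRadialCutoff (R / 2) R M ξ :=
    { contDiffOn := hξ.of_le (by simp)
      mem_Icc := fun r hr => hrange r ((half_pos hR).trans hr)
      apply_eq_zero := hzero _ ⟨half_pos hR, le_rfl⟩
      eq_one := hone
      abs_deriv_le := fun r hr => hM r ((half_pos hR).trans hr) }
  have hgrad : Continuous fun p => fderiv ℝ ψ p (1, 0) :=
    (hψ.continuous_fderiv one_ne_zero).clm_apply continuous_const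
  simpa only [wedgeU, wedgeUR, Measure.volume_eq_prod, ← Measure.prod_restrict, norm_eq_abs, sq_abs]
    using cutoff_smearing_general (ν := volume.restrict (Ioo 0 (2 * π * a))) (half_pos hR) hcutoff
      (.of_forall fun y r _ => hasDerivAt_prodMk_left_slice (hψ.differentiable one_ne_zero (r, y)))
      (.of_forall fun y => (hgrad.comp (.prodMk_left y)).continuousOn)
      (integrable_norm_sq_mul_of_hasCompactSupport hψ.continuous hsupp continuous_fst)
      (integrable_norm_sq_mul_of_hasCompactSupport hgrad (hsupp.fderiv_apply ℝ (1, 0))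
        continuous_fst)
end
end

section
/- Let a ∈ (0,1], let θ ∈ C¹((0,∞)) with C := sup_{r>0} |r θ'(r)| < ∞ and ‖θ'‖_∞ := sup_{r>0} |θ'(r)| < ∞, and suppose the support of θ' is contained in [0,R] for some R > 0. Let ε ∈ (0,1) satisfy (ε/(1−ε)) C² ≤ 1. Then for every ψ ∈ C¹_c(U) one has ∫_U [ |∂_rψ − θ'(r)∂_φψ|² + |∂_φψ|²/r² − (1/(4a²)) |ψ|²/r² ] r dr dφ ≥ ε ∫_U |∂_rψ|² r dr dφ − (ε/(1−ε)) (‖θ'‖_∞²/(4a²)) ∫_{U_R} |ψ|² r dr dφ. -/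
open MeasureTheory Real Set

noncomputable section

/-!
The inequality `‖x - y‖² ≥ ε ‖x‖² - (ε/(1-ε)) ‖y‖²` with `y = θ' ∂_φψ` gives up part of the radial
energy and an angular term. Since `(ε/(1-ε)) (r θ')² ≤ 1`, the weight
`1/r² - (ε/(1-ε)) θ'²` left on `|∂_φψ|²` is nonnegative, so Wirtinger's inequality on each angular
slice replaces `|∂_φψ|²` by `|ψ|²/(4a²)`. The terms `|ψ|²/(4a²r²)` cancel, and what remains is
`-(ε/(1-ε)) θ'² |ψ|²/(4a²)`, which lives on `r ≤ R`.

Wirtinger's inequality on `[α, β]`, with `k = π/(β-α)`: the function `q x = k cot (k (x - α))`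
solves `q' = -k² - q²`, so completing the square gives `(‖f‖² q)' ≤ ‖f'‖² - k² ‖f‖²`. The poles of
`q` at the endpoints are simple and `‖f‖²` vanishes there to second order, so `‖f‖² q` extends
continuously by `0`, which is also the value that `x / 0 = 0` assigns to it.
-/

section Wirtinger

variable {E : Type*} [NormedAddCommGroup E]

theorem continuousWithinAt_norm_sq_div [NormedSpace ℝ E] {f : ℝ → E} {s : ℝ → ℝ} {f' : E}
    {s' c : ℝ} {t : Set ℝ} (hf : HasDerivWithinAt f f' t c) (hs : HasDerivWithinAt s s' t c)
    (hs' : s' ≠ 0) (hfc : f c = 0) (hsc : s c = 0) :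
    ContinuousWithinAt (fun x => ‖f x‖ ^ 2 / s x) t c := by
  have s_isTheta := hs.hasFDerivWithinAt.isTheta_sub (isClosedEmbedding_smul_left hs').isInducing
  have f_isBigO : f =O[nhdsWithin c t] s := by
    simpa [hfc, hsc] using hf.hasFDerivWithinAt.isBigO_sub.trans s_isTheta.isBigO_symm
  have quotient_isBigO : (fun x => ‖f x‖ ^ 2 / s x) =O[nhdsWithin c t] s := by
    simpa only [div_eq_mul_inv, pow_two, mul_self_mul_inv] using
      (f_isBigO.norm_left.pow 2).mul (Asymptotics.isBigO_refl (fun x => (s x)⁻¹) _)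
  have s_tendsto : Filter.Tendsto s (nhdsWithin c t) (nhds 0) := hsc ▸ hs.continuousWithinAt
  simpa [ContinuousWithinAt, hfc] using quotient_isBigO.trans_tendsto s_tendsto

variable [InnerProductSpace ℝ E]

theorem two_mul_inner_mul_add_riccati_le (u v : E) (q Λ : ℝ) :
    2 * inner ℝ u v * q + ‖u‖ ^ 2 * (-Λ - q ^ 2) ≤ ‖v‖ ^ 2 - Λ * ‖u‖ ^ 2 := by
  have expansion : ‖v - q • u‖ ^ 2 = ‖v‖ ^ 2 - 2 * inner ℝ u v * q + ‖u‖ ^ 2 * q ^ 2 := by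
    rw [norm_sub_sq_real, inner_smul_right, norm_smul, mul_pow, norm_eq_abs, sq_abs,
      real_inner_comm]
    ring
  linarith [sq_nonneg ‖v - q • u‖]

theorem hasDerivAt_mul_cos_div_sin {k α x : ℝ} (hx : sin (k * (x - α)) ≠ 0) :
    HasDerivAt (fun y => k * cos (k * (y - α)) / sin (k * (y - α)))
      (-(k ^ 2) - (k * cos (k * (x - α)) / sin (k * (x - α))) ^ 2) x := by
  have phase : HasDerivAt (fun y => k * (y - α)) k x := by
    simpa using ((hasDerivAt_id x).sub_const α).const_mul k
  refine ((phase.cos.const_mul k).div phase.sin hx).congr_deriv ?_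
  field_simp

theorem continuousWithinAt_norm_sq_mul_cos_div_sin {k α c : ℝ} {t : Set ℝ}
    (hk : k ≠ 0) {f : ℝ → E} {f' : E} (hf : HasDerivWithinAt f f' t c)
    (hc : sin (k * (c - α)) = 0 → f c = 0) :
    ContinuousWithinAt (fun x => ‖f x‖ ^ 2 * (k * cos (k * (x - α)) / sin (k * (x - α)))) t c := by
  by_cases hsin : sin (k * (c - α)) = 0
  · have hcos : cos (k * (c - α)) ≠ 0 := by
      intro h
      simpa [h, hsin] using sin_sq_add_cos_sq (k * (c - α))
    have phase : HasDerivWithinAt (fun y => k * (y - α)) k t c := by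
      simpa using ((hasDerivWithinAt_id c t).sub_const α).const_mul k
    have quotient :=
      continuousWithinAt_norm_sq_div hf phase.sin (mul_ne_zero hcos hk) (hc hsin) hsin
    have cos_cont : ContinuousWithinAt (fun x => k * cos (k * (x - α))) t c := by fun_prop
    simpa only [mul_div_assoc', div_mul_eq_mul_div] using quotient.fun_mul cos_cont
  · exact (hf.continuousWithinAt.norm.pow 2).mul
      (hasDerivAt_mul_cos_div_sin hsin).continuousAt.continuousWithinAt

theorem wirtinger_inequality {α β : ℝ} (hαβ : α < β) {f f' : ℝ → E}
    (hf : ∀ x ∈ Icc α β, HasDerivWithinAt f (f' x) (Icc α β) x)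
    (hf' : IntervalIntegrable (fun x => ‖f' x‖ ^ 2) volume α β) (hα : f α = 0) (hβ : f β = 0) :
    (π / (β - α)) ^ 2 * ∫ x in α..β, ‖f x‖ ^ 2 ≤ ∫ x in α..β, ‖f' x‖ ^ 2 := by
  have hlen : 0 < β - α := sub_pos.2 hαβ
  set k := π / (β - α) with hk
  have k_pos : 0 < k := by positivity
  have k_mul_len : k * (β - α) = π := div_mul_cancel₀ _ hlen.ne'
  have sin_pos : ∀ x ∈ Ioo α β, 0 < sin (k * (x - α)) := fun x hx =>
    sin_pos_of_pos_of_lt_pi (mul_pos k_pos (sub_pos.2 hx.1))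
      (k_mul_len ▸ mul_lt_mul_of_pos_left (sub_lt_sub_right hx.2 α) k_pos)
  have f_eq_zero : ∀ x ∈ Icc α β, sin (k * (x - α)) = 0 → f x = 0 := by
    intro x hx hsin
    rcases eq_endpoints_or_mem_Ioo_of_mem_Icc hx with rfl | rfl | hx
    exacts [hα, hβ, absurd hsin (sin_pos x hx).ne']
  have f_sq_int : IntervalIntegrable (fun x => ‖f x‖ ^ 2) volume α β :=
    ContinuousOn.intervalIntegrable_of_Icc hαβ.le fun x hx =>
      (hf x hx).continuousWithinAt.norm.pow 2
  have key := intervalIntegral.sub_le_integral_of_hasDeriv_right_of_le hαβ.le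
    (fun x hx => continuousWithinAt_norm_sq_mul_cos_div_sin k_pos.ne' (hf x hx) (f_eq_zero x hx))
    (fun x hx => (((hf x (Ioo_subset_Icc_self hx)).hasDerivAt (Icc_mem_nhds hx.1 hx.2)).norm_sq.mul
      (hasDerivAt_mul_cos_div_sin (sin_pos x hx).ne')).hasDerivWithinAt)
    (φ := fun x => ‖f' x‖ ^ 2 - k ^ 2 * ‖f x‖ ^ 2)
    ((intervalIntegrable_iff_integrableOn_Icc_of_le hαβ.le).1 (hf'.sub (f_sq_int.const_mul _)))
    (fun x _ => two_mul_inner_mul_add_riccati_le (f x) (f' x) _ (k ^ 2))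
  rw [intervalIntegral.integral_sub hf' (f_sq_int.const_mul _),
    intervalIntegral.integral_const_mul] at key
  simpa [hα, hβ] using key

end Wirtinger

section LocallyIntegrable

variable {X F : Type*} [TopologicalSpace X] [MeasurableSpace X] [NormedAddCommGroup F]

theorem locallyIntegrableOn_of_norm_le [OpensMeasurableSpace X] {μ : Measure X}
    [IsLocallyFiniteMeasure μ] {s : Set X} (hs : MeasurableSet s) {u : X → F} {M : ℝ}
    (hu : AEStronglyMeasurable u (μ.restrict s)) (hM : ∀ x ∈ s, ‖u x‖ ≤ M) :
    LocallyIntegrableOn u s μ :=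
  locallyIntegrableOn_of_locallyIntegrable_restrict <| (locallyIntegrable_const M).mono hu <|
    ae_restrict_of_forall_mem hs fun x hx => (hM x hx).trans (le_abs_self M)

theorem aestronglyMeasurable_of_hasDerivAt [NormedSpace ℝ F] [CompleteSpace F] {f f' : ℝ → F}
    {s : Set ℝ} (hs : MeasurableSet s) (hf : ∀ x ∈ s, HasDerivAt f (f' x) x) :
    AEStronglyMeasurable f' (volume.restrict s) :=
  (aestronglyMeasurable_deriv f _).congr <|
    ae_restrict_of_forall_mem hs fun x hx => (hf x hx).deriv

variable {Y : Type*} [TopologicalSpace Y] [MeasurableSpace Y] {μ : Measure X} {ν : Measure Y}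
  [SFinite μ] [SFinite ν] [IsFiniteMeasureOnCompacts ν]

theorem integrableOn_comp_fst_of_isCompact {w : X → F} {s : Set X} (hw : LocallyIntegrableOn w s μ)
    {K : Set (X × Y)} (hK : IsCompact K) (hKs : MapsTo Prod.fst K s) :
    IntegrableOn (fun p => w p.1) K (μ.prod ν) := by
  have fst_int : IntegrableOn w (Prod.fst '' K) μ :=
    hw.integrableOn_compact_subset hKs.image_subset (hK.image continuous_fst)
  have snd_finite : IsFiniteMeasure (ν.restrict (Prod.snd '' K)) :=
    isFiniteMeasure_restrict.2 (hK.image continuous_snd).measure_ne_top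
  have box_int : IntegrableOn (fun p => w p.1) ((Prod.fst '' K) ×ˢ (Prod.snd '' K)) (μ.prod ν) := by
    rw [IntegrableOn, ← Measure.prod_restrict]
    exact fst_int.integrable.comp_fst _
  exact box_int.mono_set fun p hp => ⟨mem_image_of_mem _ hp, mem_image_of_mem _ hp⟩

theorem integrable_mul_comp_fst [T2Space X] [T2Space Y] [OpensMeasurableSpace (X × Y)]
    {w : X → ℝ} {s : Set X} (hw : LocallyIntegrableOn w s μ)
    {K : Set (X × Y)} (hK : IsCompact K) (hKs : MapsTo Prod.fst K s) {h : X × Y → ℝ}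
    (hh : ContinuousOn h K) (hzero : ∀ p ∉ K, h p = 0) :
    Integrable (fun p => h p * w p.1) (μ.prod ν) := by
  rw [← integrableOn_iff_integrable_of_support_subset (s := K)]
  · exact (integrableOn_comp_fst_of_isCompact hw hK hKs).continuousOn_mul hh hK
  · exact Function.support_subset_iff'.2 fun p hp => by rw [hzero p hp, zero_mul]

end LocallyIntegrable

section ShiftedForm

variable {E : Type*} [NormedAddCommGroup E]

theorem mul_norm_sq_sub_le_norm_sub_sq {ε : ℝ} (hε : ε < 1) (x y : E) :
    ε * ‖x‖ ^ 2 - ε / (1 - ε) * ‖y‖ ^ 2 ≤ ‖x - y‖ ^ 2 := by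
  have hε' : 0 < 1 - ε := sub_pos.2 hε
  have square : (‖x‖ - ‖y‖) ^ 2 - (ε * ‖x‖ ^ 2 - ε / (1 - ε) * ‖y‖ ^ 2)
      = ((1 - ε) * ‖x‖ - ‖y‖) ^ 2 / (1 - ε) := by
    field_simp
    ring
  have square_nonneg : 0 ≤ ((1 - ε) * ‖x‖ - ‖y‖) ^ 2 / (1 - ε) := by positivity
  have reverse_triangle : (‖x‖ - ‖y‖) ^ 2 ≤ ‖x - y‖ ^ 2 :=
    sq_le_sq' (by linarith [norm_sub_rev x y, norm_sub_norm_le y x]) (norm_sub_norm_le x y)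
  linarith

theorem shifted_integrand_lower_bound [NormedSpace ℝ E] {ε r : ℝ} (hε : ε < 1) (hr : 0 ≤ r)
    (b t : ℝ) (x z s : E) :
    ε * (‖x‖ ^ 2 * r) + (‖z‖ ^ 2 - b * ‖s‖ ^ 2) * (r / r ^ 2 - ε / (1 - ε) * (r * t ^ 2))
        - ε / (1 - ε) * b * (‖s‖ ^ 2 * (r * t ^ 2))
      ≤ (‖x - t • z‖ ^ 2 + ‖z‖ ^ 2 / r ^ 2 - b * ‖s‖ ^ 2 / r ^ 2) * r := by
  have norm_smul_sq : ‖t • z‖ ^ 2 = t ^ 2 * ‖z‖ ^ 2 := by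
    rw [norm_smul, mul_pow, norm_eq_abs, sq_abs]
  have young := mul_le_mul_of_nonneg_right (mul_norm_sq_sub_le_norm_sub_sq hε x (t • z)) hr
  rw [norm_smul_sq] at young
  linear_combination young

end ShiftedForm

section RadialWeights

variable {a : ℝ} {u : ℝ → ℝ}

theorem locallyIntegrableOn_Ioi_mul (hu : LocallyIntegrableOn u (Ioi 0)) :
    LocallyIntegrableOn (fun r => r * u r) (Ioi 0) :=
  hu.continuousOn_mul continuousOn_id isOpen_Ioi.isLocallyClosed

theorem locallyIntegrableOn_id_Ioi : LocallyIntegrableOn (fun r : ℝ => r) (Ioi 0) :=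
  continuous_id.locallyIntegrable.locallyIntegrableOn _

theorem locallyIntegrableOn_div_sq_Ioi : LocallyIntegrableOn (fun r : ℝ => r / r ^ 2) (Ioi 0) :=
  (continuousOn_id.div (continuousOn_pow 2) fun _ hr =>
    pow_ne_zero 2 (ne_of_gt hr)).locallyIntegrableOn measurableSet_Ioi

theorem locallyIntegrableOn_residual_weight
    (hu_sq : LocallyIntegrableOn (fun r => u r ^ 2) (Ioi 0)) (k : ℝ) :
    LocallyIntegrableOn (fun r => r / r ^ 2 - k * (r * u r ^ 2)) (Ioi 0) :=
  locallyIntegrableOn_div_sq_Ioi.sub ((locallyIntegrableOn_Ioi_mul hu_sq).smul k)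

theorem residual_weight_nonneg {k C : ℝ} (hk : 0 ≤ k) (hkC : k * C ^ 2 ≤ 1) {r t : ℝ} (hr : 0 < r)
    (hC : |r * t| ≤ C) : 0 ≤ r / r ^ 2 - k * (r * t ^ 2) := by
  have sq_le : k * (r * t) ^ 2 ≤ 1 :=
    (mul_le_mul_of_nonneg_left (sq_le_sq' (abs_le.1 hC).1 (abs_le.1 hC).2) hk).trans hkC
  have factored : r / r ^ 2 - k * (r * t ^ 2) = (1 - k * (r * t) ^ 2) / r := by
    field_simp
  rw [factored]
  exact div_nonneg (sub_nonneg.2 sq_le) hr.le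

theorem measurableSet_wedgeU (a : ℝ) : MeasurableSet (wedgeU a) :=
  measurableSet_Ioi.prod measurableSet_Ioo

theorem setIntegral_wedgeU_le_of_eq_zero_of_lt {M R : ℝ} {h : ℝ × ℝ → ℝ} (hh : ∀ p, 0 ≤ h p)
    (hM : ∀ r ∈ Ioi (0 : ℝ), |u r| ≤ M) (hsupp : ∀ r ∈ Ioi (0 : ℝ), R < r → u r = 0)
    (hint : IntegrableOn (fun p => h p * p.1) (wedgeU a))
    (hint_u : IntegrableOn (fun p => h p * (p.1 * u p.1 ^ 2)) (wedgeU a)) :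
    ∫ p in wedgeU a, h p * (p.1 * u p.1 ^ 2) ≤ M ^ 2 * ∫ p in wedgeUR a R, h p * p.1 := by
  have subset : wedgeUR a R ⊆ wedgeU a := prod_mono_left Ioo_subset_Ioi_self
  have ae_radius_ne : ∀ᵐ p : ℝ × ℝ, p.1 ≠ R :=
    Measure.quasiMeasurePreserving_fst.ae (Measure.ae_ne volume R)
  have vanishes : ∀ᵐ p : ℝ × ℝ, p ∈ wedgeU a \ wedgeUR a R → h p * (p.1 * u p.1 ^ 2) = 0 := by
    filter_upwards [ae_radius_ne] with p hpR ⟨hp, hpUR⟩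
    have R_lt : R < p.1 := by
      by_contra! hle
      exact hpUR ⟨⟨hp.1, hle.lt_of_ne hpR⟩, hp.2⟩
    simp [hsupp p.1 hp.1 R_lt]
  rw [setIntegral_eq_of_subset_of_ae_sdiff_eq_zero (measurableSet_wedgeU a).nullMeasurableSet
    subset vanishes, ← integral_const_mul]
  refine setIntegral_mono_on (hint_u.mono_set subset) ((hint.mono_set subset).const_mul _)
    (measurableSet_Ioo.prod measurableSet_Ioo) fun p hp => ?_
  have u_sq_le : u p.1 ^ 2 ≤ M ^ 2 :=
    sq_le_sq' (abs_le.1 (hM p.1 hp.1.1)).1 (abs_le.1 (hM p.1 hp.1.1)).2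
  linarith [mul_le_mul_of_nonneg_left u_sq_le (mul_nonneg (hh p) hp.1.1.le)]

end RadialWeights

section Wedge

variable {E : Type*} [NormedAddCommGroup E] {a : ℝ} {ψ : ℝ × ℝ → E} {u : ℝ → ℝ}

theorem integrable_mul_radial_weight (hcs : HasCompactSupport ψ) (hts : tsupport ψ ⊆ wedgeU a)
    {h : ℝ × ℝ → ℝ} (hh : Continuous h) (hzero : ∀ p ∉ tsupport ψ, h p = 0)
    (hu : LocallyIntegrableOn u (Ioi 0)) : Integrable (fun p => h p * u p.1) :=
  integrable_mul_comp_fst hu hcs.isCompact (fun _ hp => (hts hp).1) hh.continuousOn hzero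

theorem integrable_norm_sq_mul_radial_weight (hψ : Continuous ψ) (hcs : HasCompactSupport ψ)
    (hts : tsupport ψ ⊆ wedgeU a) (hu : LocallyIntegrableOn u (Ioi 0)) :
    Integrable (fun p => ‖ψ p‖ ^ 2 * u p.1) :=
  integrable_mul_radial_weight hcs hts (by fun_prop)
    (fun p hp => by simp [image_eq_zero_of_notMem_tsupport hp]) hu

variable [InnerProductSpace ℝ E]

theorem wirtinger_inequality_angular (ha : 0 < a) (hψ : ContDiff ℝ 1 ψ)
    (hts : tsupport ψ ⊆ wedgeU a) (r : ℝ) :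
    0 ≤ ∫ φ in Ioo 0 (2 * π * a), (‖fderiv ℝ ψ (r, φ) (0, 1)‖ ^ 2
      - 1 / (4 * a ^ 2) * ‖ψ (r, φ)‖ ^ 2) := by
  have angle_pos : 0 < 2 * π * a := by positivity
  have slice_deriv : ∀ φ, HasDerivAt (fun φ => ψ (r, φ)) (fderiv ℝ ψ (r, φ) (0, 1)) φ := fun φ =>
    (hψ.differentiable one_ne_zero (r, φ)).hasFDerivAt.comp_hasDerivAt φ
      ((hasDerivAt_const φ r).prodMk (hasDerivAt_id φ))
  have slice_int : IntervalIntegrable (fun φ => ‖ψ (r, φ)‖ ^ 2) volume 0 (2 * π * a) :=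
    Continuous.intervalIntegrable (by fun_prop) _ _
  have slice_deriv_int :
      IntervalIntegrable (fun φ => ‖fderiv ℝ ψ (r, φ) (0, 1)‖ ^ 2) volume 0 (2 * π * a) :=
    Continuous.intervalIntegrable (by fun_prop) _ _
  have ψ_eq_zero : ∀ φ ∉ Ioo 0 (2 * π * a), ψ (r, φ) = 0 := fun φ hφ =>
    image_eq_zero_of_notMem_tsupport fun h => hφ (hts h).2
  have wirtinger := wirtinger_inequality angle_pos (fun φ _ => (slice_deriv φ).hasDerivWithinAt)
    slice_deriv_int (ψ_eq_zero _ left_notMem_Ioo) (ψ_eq_zero _ right_notMem_Ioo)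
  have constant_eq : (π / (2 * π * a - 0)) ^ 2 = 1 / (4 * a ^ 2) := by
    field_simp
    ring
  rw [constant_eq] at wirtinger
  rw [← integral_Ioc_eq_integral_Ioo, ← intervalIntegral.integral_of_le angle_pos.le,
    intervalIntegral.integral_sub slice_deriv_int (slice_int.const_mul _),
    intervalIntegral.integral_const_mul]
  exact sub_nonneg.2 wirtinger

theorem integrable_inner_fderiv_mul_radial_weight (hψ : ContDiff ℝ 1 ψ)
    (hcs : HasCompactSupport ψ) (hts : tsupport ψ ⊆ wedgeU a)
    (hu : LocallyIntegrableOn u (Ioi 0)) (v w : ℝ × ℝ) :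
    Integrable (fun p => inner ℝ (fderiv ℝ ψ p v) (fderiv ℝ ψ p w) * u p.1) :=
  integrable_mul_radial_weight hcs hts (by fun_prop)
    (fun p hp => by simp [fderiv_of_notMem_tsupport ℝ hp]) hu

theorem integrable_norm_sq_fderiv_mul_radial_weight (hψ : ContDiff ℝ 1 ψ)
    (hcs : HasCompactSupport ψ) (hts : tsupport ψ ⊆ wedgeU a)
    (hu : LocallyIntegrableOn u (Ioi 0)) (v : ℝ × ℝ) :
    Integrable (fun p => ‖fderiv ℝ ψ p v‖ ^ 2 * u p.1) := by
  simpa only [real_inner_self_eq_norm_sq] using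
    integrable_inner_fderiv_mul_radial_weight hψ hcs hts hu v v

theorem integrable_angular_mul_radial_weight (hψ : ContDiff ℝ 1 ψ) (hcs : HasCompactSupport ψ)
    (hts : tsupport ψ ⊆ wedgeU a) (hu : LocallyIntegrableOn u (Ioi 0)) (b : ℝ) :
    Integrable (fun p => (‖fderiv ℝ ψ p (0, 1)‖ ^ 2 - b * ‖ψ p‖ ^ 2) * u p.1) := by
  have energy := integrable_norm_sq_fderiv_mul_radial_weight hψ hcs hts hu (0, 1)
  have mass := integrable_norm_sq_mul_radial_weight hψ.continuous hcs hts hu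
  exact (energy.sub (mass.const_mul b)).congr <| ae_of_all _ fun p => by
    simp only [Pi.sub_apply]
    ring

theorem setIntegral_wedgeU_angular_nonneg (ha : 0 < a) (hψ : ContDiff ℝ 1 ψ)
    (hcs : HasCompactSupport ψ) (hts : tsupport ψ ⊆ wedgeU a)
    (hu : LocallyIntegrableOn u (Ioi 0)) (hu_nonneg : ∀ r ∈ Ioi (0 : ℝ), 0 ≤ u r) :
    0 ≤ ∫ p in wedgeU a, (‖fderiv ℝ ψ p (0, 1)‖ ^ 2 - 1 / (4 * a ^ 2) * ‖ψ p‖ ^ 2) * u p.1 := by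
  have integrable := integrable_angular_mul_radial_weight hψ hcs hts hu (1 / (4 * a ^ 2))
  rw [Measure.volume_eq_prod] at integrable ⊢
  rw [wedgeU, setIntegral_prod _ integrable.integrableOn]
  refine setIntegral_nonneg measurableSet_Ioi fun r hr => ?_
  simp only [integral_mul_const]
  exact mul_nonneg (wirtinger_inequality_angular ha hψ hts r) (hu_nonneg r hr)

theorem integrable_shifted_form (hψ : ContDiff ℝ 1 ψ) (hcs : HasCompactSupport ψ)
    (hts : tsupport ψ ⊆ wedgeU a) (hu : LocallyIntegrableOn u (Ioi 0))
    (hu_sq : LocallyIntegrableOn (fun r => u r ^ 2) (Ioi 0)) (b : ℝ) :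
    Integrable (fun p => (‖fderiv ℝ ψ p (1, 0) - u p.1 • fderiv ℝ ψ p (0, 1)‖ ^ 2
      + ‖fderiv ℝ ψ p (0, 1)‖ ^ 2 / p.1 ^ 2 - b * ‖ψ p‖ ^ 2 / p.1 ^ 2) * p.1) := by
  have radial := integrable_norm_sq_fderiv_mul_radial_weight hψ hcs hts
    locallyIntegrableOn_id_Ioi (1, 0)
  have cross := integrable_inner_fderiv_mul_radial_weight hψ hcs hts
    (locallyIntegrableOn_Ioi_mul hu) (1, 0) (0, 1)
  have shift := integrable_norm_sq_fderiv_mul_radial_weight hψ hcs hts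
    (locallyIntegrableOn_Ioi_mul hu_sq) (0, 1)
  have angular := integrable_angular_mul_radial_weight hψ hcs hts locallyIntegrableOn_div_sq_Ioi b
  refine (((radial.sub (cross.const_mul 2)).add shift).add angular).congr (ae_of_all _ fun p => ?_)
  simp only [Pi.add_apply, Pi.sub_apply, norm_sub_sq_real, inner_smul_right, norm_smul, mul_pow,
    norm_eq_abs, sq_abs]
  ring

theorem setIntegral_shifted_form_ge {ε : ℝ} (hε : ε < 1) (hψ : ContDiff ℝ 1 ψ)
    (hcs : HasCompactSupport ψ) (hts : tsupport ψ ⊆ wedgeU a) (hu : LocallyIntegrableOn u (Ioi 0))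
    (hu_sq : LocallyIntegrableOn (fun r => u r ^ 2) (Ioi 0)) (b : ℝ) :
    ε * (∫ p in wedgeU a, ‖fderiv ℝ ψ p (1, 0)‖ ^ 2 * p.1)
        + (∫ p in wedgeU a, (‖fderiv ℝ ψ p (0, 1)‖ ^ 2 - b * ‖ψ p‖ ^ 2)
            * (p.1 / p.1 ^ 2 - ε / (1 - ε) * (p.1 * u p.1 ^ 2)))
        - ε / (1 - ε) * b * (∫ p in wedgeU a, ‖ψ p‖ ^ 2 * (p.1 * u p.1 ^ 2))
      ≤ ∫ p in wedgeU a, (‖fderiv ℝ ψ p (1, 0) - u p.1 • fderiv ℝ ψ p (0, 1)‖ ^ 2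
          + ‖fderiv ℝ ψ p (0, 1)‖ ^ 2 / p.1 ^ 2 - b * ‖ψ p‖ ^ 2 / p.1 ^ 2) * p.1 := by
  have radial := ((integrable_norm_sq_fderiv_mul_radial_weight hψ hcs hts
    locallyIntegrableOn_id_Ioi (1, 0)).const_mul ε).integrableOn (s := wedgeU a)
  have angular := (integrable_angular_mul_radial_weight hψ hcs hts
    (locallyIntegrableOn_residual_weight hu_sq (ε / (1 - ε))) b).integrableOn (s := wedgeU a)
  have error := ((integrable_norm_sq_mul_radial_weight hψ.continuous hcs hts
    (locallyIntegrableOn_Ioi_mul hu_sq)).const_mul (ε / (1 - ε) * b)).integrableOn (s := wedgeU a)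
  rw [← integral_const_mul, ← integral_const_mul, ← integral_add radial angular,
    ← integral_sub (radial.fun_add angular) error]
  exact setIntegral_mono_on ((radial.fun_add angular).fun_sub error)
    (integrable_shifted_form hψ hcs hts hu hu_sq b).integrableOn (measurableSet_wedgeU a)
    fun p hp => shifted_integrand_lower_bound hε (le_of_lt hp.1) b _ _ _ _

end Wedge

theorem shifted_form_radial_lower_bound_general {E : Type*} [NormedAddCommGroup E]
    [InnerProductSpace ℝ E] {a : ℝ} (ha : 0 < a) {θ θ' : ℝ → ℝ}
    (hderiv : ∀ r ∈ Ioi (0 : ℝ), HasDerivAt θ (θ' r) r)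
    {C : ℝ} (hC : ∀ r ∈ Ioi (0 : ℝ), |r * θ' r| ≤ C)
    {M : ℝ} (hM : ∀ r ∈ Ioi (0 : ℝ), |θ' r| ≤ M)
    {R : ℝ} (hsupp : ∀ r ∈ Ioi (0 : ℝ), R < r → θ' r = 0)
    {ε : ℝ} (hε : ε ∈ Ioo (0 : ℝ) 1) (hεC : ε / (1 - ε) * C ^ 2 ≤ 1)
    {ψ : ℝ × ℝ → E} (hψ : ContDiff ℝ 1 ψ) (hcs : HasCompactSupport ψ)
    (hts : tsupport ψ ⊆ wedgeU a) :
    ε * (∫ p in wedgeU a, ‖fderiv ℝ ψ p (1, 0)‖ ^ 2 * p.1)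
        - ε / (1 - ε) * (M ^ 2 / (4 * a ^ 2)) * ∫ p in wedgeUR a R, ‖ψ p‖ ^ 2 * p.1
      ≤ ∫ p in wedgeU a, (‖fderiv ℝ ψ p (1, 0) - θ' p.1 • fderiv ℝ ψ p (0, 1)‖ ^ 2
          + ‖fderiv ℝ ψ p (0, 1)‖ ^ 2 / p.1 ^ 2
          - 1 / (4 * a ^ 2) * ‖ψ p‖ ^ 2 / p.1 ^ 2) * p.1 := by
  have k_nonneg : 0 ≤ ε / (1 - ε) := div_nonneg hε.1.le (sub_nonneg.2 hε.2.le)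
  have θ'_meas := aestronglyMeasurable_of_hasDerivAt measurableSet_Ioi hderiv
  have hθ' : LocallyIntegrableOn θ' (Ioi 0) :=
    locallyIntegrableOn_of_norm_le measurableSet_Ioi θ'_meas hM
  have hθ'_sq : LocallyIntegrableOn (fun r => θ' r ^ 2) (Ioi 0) :=
    locallyIntegrableOn_of_norm_le measurableSet_Ioi (θ'_meas.pow 2) fun r hr => by
      simpa only [norm_pow] using pow_le_pow_left₀ (norm_nonneg _) (hM r hr) 2
  have decomposition := setIntegral_shifted_form_ge hε.2 hψ hcs hts hθ' hθ'_sq (1 / (4 * a ^ 2))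
  have angular_nonneg := setIntegral_wedgeU_angular_nonneg ha hψ hcs hts
    (locallyIntegrableOn_residual_weight hθ'_sq (ε / (1 - ε)))
    fun r hr => residual_weight_nonneg k_nonneg hεC hr (hC r hr)
  have error_le := setIntegral_wedgeU_le_of_eq_zero_of_lt (a := a) (fun p => sq_nonneg ‖ψ p‖) hM
    hsupp
    (integrable_norm_sq_mul_radial_weight hψ.continuous hcs hts
      locallyIntegrableOn_id_Ioi).integrableOn
    (integrable_norm_sq_mul_radial_weight hψ.continuous hcs hts
      (locallyIntegrableOn_Ioi_mul hθ'_sq)).integrableOn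
  have scaled_error_le := mul_le_mul_of_nonneg_left error_le
    (mul_nonneg k_nonneg (by positivity : 0 ≤ 1 / (4 * a ^ 2)))
  linear_combination decomposition + angular_nonneg + scaled_error_le

/-- **Lower bound on the shifted Hardy form by the radial energy.**
If `|r θ'(r)| ≤ C`, `|θ'(r)| ≤ M` on `(0,∞)`, `θ'` is supported in `[0,R]`, and
`ε ∈ (0,1)` satisfies `(ε/(1-ε)) C² ≤ 1`, then for every `ψ ∈ C¹_c(U)`,
`∫_U [ |∂_rψ - θ'∂_φψ|² + |∂_φψ|²/r² - ψ²/(4a²r²) ] r dr dφ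
  ≥ ε ∫_U |∂_rψ|² r dr dφ - (ε/(1-ε)) (M²/(4a²)) ∫_{U_R} ψ² r dr dφ`. -/
theorem shifted_form_radial_lower_bound
    (a : ℝ) (ha : a ∈ Ioc (0:ℝ) 1)
    (θ θ' : ℝ → ℝ)
    (hderiv : ∀ r ∈ Ioi (0:ℝ), HasDerivAt θ (θ' r) r)
    (hcont : ContinuousOn θ' (Ioi 0))
    (C : ℝ) (hC : ∀ r ∈ Ioi (0:ℝ), |r * θ' r| ≤ C)
    (M : ℝ) (hM : ∀ r ∈ Ioi (0:ℝ), |θ' r| ≤ M)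
    (R : ℝ) (hR : 0 < R) (hsupp : ∀ r ∈ Ioi (0:ℝ), R < r → θ' r = 0)
    (ε : ℝ) (hε : ε ∈ Ioo (0:ℝ) 1) (hεC : ε / (1 - ε) * C ^ 2 ≤ 1) :
    ∀ ψ : ℝ × ℝ → ℝ,
      ContDiff ℝ 1 ψ → HasCompactSupport ψ → tsupport ψ ⊆ wedgeU a →
      (∫ p in wedgeU a,
          ((fderiv ℝ ψ p (1, 0) - θ' p.1 * fderiv ℝ ψ p (0, 1)) ^ 2
            + (fderiv ℝ ψ p (0, 1)) ^ 2 / p.1 ^ 2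
            - (1 / (4 * a ^ 2)) * (ψ p) ^ 2 / p.1 ^ 2) * p.1)
        ≥ ε * (∫ p in wedgeU a, (fderiv ℝ ψ p (1, 0)) ^ 2 * p.1)
          - ε / (1 - ε) * (M ^ 2 / (4 * a ^ 2))
            * ∫ p in wedgeUR a R, (ψ p) ^ 2 * p.1 := by
  intro ψ hψ hcs hts
  simpa only [ge_iff_le, norm_eq_abs, sq_abs, smul_eq_mul] using
    shifted_form_radial_lower_bound_general ha.1 hderiv hC hM hsupp hε hεC hψ hcs hts
end
end

section
/- Let a ∈ (0,1]. Then for every φ ∈ C¹_c(U) one has ∫_U [ |∂_ρφ(ρ,φ)|² + |∂_φφ(ρ,φ)|²/ρ² + (ρ²/16) |φ(ρ,φ)|² ] ρ dρ dφ ≥ (1/2 + 1/(4a)) ∫_U |φ(ρ,φ)|² ρ dρ dφ. -/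
open MeasureTheory Real Set

noncomputable section

/-!
Each derivative is bounded below by completing the square against a positive zero mode. If `u > 0`
satisfies `-∂ₑ(m ∂ₑu) = V u`, then `w = m ∂ₑu / u` solves the Riccati equation
`∂ₑw = -(V + w² / m)`, and integrating `∂ₑ(w ‖ψ‖²)` gives `∫ V ‖ψ‖² ≤ ∫ m ‖∂ₑψ‖²`. With
`ν = 1 / (2a)`, the ground state `ρ ^ ν * exp (-ω ρ² / 2) * sin (ν φ)` supplies the two functions
`u`: its sine factor turns the angular energy into a centrifugal potential `ν² / ρ²`, and its radial
factor is the ground state of the oscillator with that potential. The statement is the case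
`ω = 1 / 4`.
-/

open scoped RealInnerProductSpace

theorem mul_two_mul_inner_le_mul_norm_sq_add {H : Type*} [NormedAddCommGroup H]
    [InnerProductSpace ℝ H] {m : ℝ} (hm : 0 < m) (w : ℝ) (x y : H) :
    w * (2 * ⟪x, y⟫) ≤ m * ‖y‖ ^ 2 + w ^ 2 / m * ‖x‖ ^ 2 := by
  have square_expansion : m * ‖y - (w / m) • x‖ ^ 2 =
      m * ‖y‖ ^ 2 + w ^ 2 / m * ‖x‖ ^ 2 - w * (2 * ⟪x, y⟫) := by
    rw [norm_sub_sq_real, inner_smul_right, norm_smul, mul_pow, Real.norm_eq_abs, sq_abs,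
      real_inner_comm]
    field_simp
    ring
  have square_nonneg : 0 ≤ m * ‖y - (w / m) • x‖ ^ 2 := by positivity
  linarith

section Integrability

variable {X : Type*} [TopologicalSpace X] [T2Space X] [MeasurableSpace X] [OpensMeasurableSpace X]
  {μ : Measure X} [IsFiniteMeasureOnCompacts μ]

theorem integrable_mul_of_continuousOn_compact {K : Set X} (hK : IsCompact K) {k q : X → ℝ}
    (hk : ContinuousOn k K) (hq : Continuous q) (hqK : ∀ x ∉ K, q x = 0) :
    Integrable (fun x => k x * q x) μ := by
  have support_subset : Function.support (fun x => k x * q x) ⊆ K := fun x hx => by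
    by_contra hxK
    exact hx (by simp only [hqK x hxK, mul_zero])
  exact (integrableOn_iff_integrable_of_support_subset support_subset).1
    ((hk.mul hq.continuousOn).integrableOn_compact hK)

theorem integrable_mul_norm_sq {F : Type*} [NormedAddCommGroup F] {ψ : X → F} (hψ : Continuous ψ)
    (hc : HasCompactSupport ψ) {k : X → ℝ} (hk : ContinuousOn k (tsupport ψ)) :
    Integrable (fun x => k x * ‖ψ x‖ ^ 2) μ :=
  integrable_mul_of_continuousOn_compact hc hk (by fun_prop) fun x hx => by
    simp [image_eq_zero_of_notMem_tsupport hx]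

end Integrability

section IntegrationByParts

variable {E : Type*} [NormedAddCommGroup E] [NormedSpace ℝ E] {F : Type*}
  [NormedAddCommGroup F] [NormedSpace ℝ F] {H : Type*} [NormedAddCommGroup H]
  [InnerProductSpace ℝ H] {ψ : E → H}

theorem continuous_fderiv_apply_const {ψ : E → F} (hψ : ContDiff ℝ 1 ψ) (e : E) :
    Continuous fun x => fderiv ℝ ψ x e :=
  (hψ.continuous_fderiv one_ne_zero).clm_apply continuous_const

variable [MeasurableSpace E] [BorelSpace E] {μ : Measure E}

theorem integrable_mul_norm_fderiv_sq [IsFiniteMeasureOnCompacts μ] {ψ : E → F}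
    (hψ : ContDiff ℝ 1 ψ) (hc : HasCompactSupport ψ) (e : E) {k : E → ℝ}
    (hk : ContinuousOn k (tsupport ψ)) :
    Integrable (fun x => k x * ‖fderiv ℝ ψ x e‖ ^ 2) μ :=
  integrable_mul_of_continuousOn_compact hc hk ((continuous_fderiv_apply_const hψ e).norm.pow 2)
    fun x hx => by simp [fderiv_of_notMem_tsupport (𝕜 := ℝ) hx]

theorem integrable_mul_inner_fderiv [IsFiniteMeasureOnCompacts μ] (hψ : ContDiff ℝ 1 ψ)
    (hc : HasCompactSupport ψ) (e : E) {k : E → ℝ} (hk : ContinuousOn k (tsupport ψ)) :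
    Integrable (fun x => k x * (2 * ⟪ψ x, fderiv ℝ ψ x e⟫)) μ :=
  integrable_mul_of_continuousOn_compact hc hk
    (continuous_const.mul (hψ.continuous.inner (continuous_fderiv_apply_const hψ e)))
    fun x hx => by simp [image_eq_zero_of_notMem_tsupport hx]

variable [FiniteDimensional ℝ E] [μ.IsAddHaarMeasure]

theorem integral_mul_inner_fderiv_eq_neg {w w' : E → ℝ} {e : E} (hψ : ContDiff ℝ 1 ψ)
    (hc : HasCompactSupport ψ) (hw : ContinuousOn w (tsupport ψ))
    (hw' : ContinuousOn w' (tsupport ψ))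
    (hderiv : ∀ x ∈ tsupport ψ, HasLineDerivAt ℝ w (w' x) x e) :
    ∫ x, w x * (2 * ⟪ψ x, fderiv ℝ ψ x e⟫) ∂μ = -∫ x, w' x * ‖ψ x‖ ^ 2 ∂μ := by
  have tsupport_norm_sq : tsupport (fun x => ‖ψ x‖ ^ 2) ⊆ tsupport ψ :=
    tsupport_comp_subset (g := fun y : H => ‖y‖ ^ 2) (by simp) ψ
  refine integral_bilinear_hasLineDerivAt_right_eq_neg_left_of_integrable
    (B := ContinuousLinearMap.mul ℝ ℝ) (v := e) (integrable_mul_norm_sq hψ.continuous hc hw')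
    (integrable_mul_inner_fderiv hψ hc e hw) (integrable_mul_norm_sq hψ.continuous hc hw)
    (fun x hx => hderiv x (tsupport_norm_sq hx)) fun x _ => ?_
  have hasFDerivAt_ψ := (hψ.differentiable one_ne_zero x).hasFDerivAt
  simpa [two_mul, two_smul] using hasFDerivAt_ψ.norm_sq.hasLineDerivAt e

theorem integral_mul_norm_sq_le_of_riccati {m V w : E → ℝ} {e : E} (hψ : ContDiff ℝ 1 ψ)
    (hc : HasCompactSupport ψ) (hm : ContinuousOn m (tsupport ψ))
    (hm_pos : ∀ x ∈ tsupport ψ, 0 < m x) (hV : ContinuousOn V (tsupport ψ))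
    (hw : ContinuousOn w (tsupport ψ))
    (riccati : ∀ x ∈ tsupport ψ, HasLineDerivAt ℝ w (-(V x + w x ^ 2 / m x)) x e) :
    ∫ x, V x * ‖ψ x‖ ^ 2 ∂μ ≤ ∫ x, m x * ‖fderiv ℝ ψ x e‖ ^ 2 ∂μ := by
  have hq : ContinuousOn (fun x => w x ^ 2 / m x) (tsupport ψ) :=
    (hw.pow 2).div hm fun x hx => (hm_pos x hx).ne'
  have integrable_V := integrable_mul_norm_sq (μ := μ) hψ.continuous hc hV
  have integrable_q := integrable_mul_norm_sq (μ := μ) hψ.continuous hc hq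
  have integrable_energy := integrable_mul_norm_fderiv_sq (μ := μ) hψ hc e hm
  have young : ∫ x, w x * (2 * ⟪ψ x, fderiv ℝ ψ x e⟫) ∂μ ≤
      ∫ x, (m x * ‖fderiv ℝ ψ x e‖ ^ 2 + w x ^ 2 / m x * ‖ψ x‖ ^ 2) ∂μ := by
    refine integral_mono (integrable_mul_inner_fderiv hψ hc e hw)
      (integrable_energy.add integrable_q) fun x => ?_
    by_cases hx : x ∈ tsupport ψ
    · exact mul_two_mul_inner_le_mul_norm_sq_add (hm_pos x hx) _ _ _
    · simp [image_eq_zero_of_notMem_tsupport hx, fderiv_of_notMem_tsupport (𝕜 := ℝ) hx]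
  have by_parts := integral_mul_inner_fderiv_eq_neg (μ := μ) hψ hc hw (hV.add hq).neg riccati
  simp only [Pi.neg_apply, Pi.add_apply, neg_mul, add_mul, integral_neg, neg_neg] at by_parts
  rw [by_parts, integral_add integrable_V integrable_q,
    integral_add integrable_energy integrable_q] at young
  exact le_of_add_le_add_right young

end IntegrationByParts

section ProductLineDerivatives

variable {E F : Type*} [NormedAddCommGroup E] [NormedSpace ℝ E] [NormedAddCommGroup F]
  [NormedSpace ℝ F]

theorem hasLineDerivAt_one_zero_of_hasDerivAt {f : ℝ × E → F} {f' : F} {p : ℝ × E}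
    (hf : HasDerivAt (fun r => f (r, p.2)) f' p.1) : HasLineDerivAt ℝ f f' p (1, 0) := by
  have shifted := HasDerivAt.comp_const_add p.1 0 (by simpa only [add_zero] using hf)
  simpa [HasLineDerivAt, Prod.add_def] using shifted

theorem hasLineDerivAt_zero_one_of_hasDerivAt {f : E × ℝ → F} {f' : F} {p : E × ℝ}
    (hf : HasDerivAt (fun t => f (p.1, t)) f' p.2) : HasLineDerivAt ℝ f f' p (0, 1) := by
  have shifted := HasDerivAt.comp_const_add p.2 0 (by simpa only [add_zero] using hf)
  simpa [HasLineDerivAt, Prod.add_def] using shifted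

end ProductLineDerivatives

theorem hasDerivAt_cot {x : ℝ} (hx : sin x ≠ 0) : HasDerivAt cot (-(1 + cot x ^ 2)) x := by
  have h := (hasDerivAt_cos x).div (hasDerivAt_sin x) hx
  refine (h.congr_of_eventuallyEq (.of_forall cot_eq_cos_div_sin)).congr_deriv ?_
  rw [cot_eq_cos_div_sin]
  field_simp
  ring

section PolarCoordinates

variable {H : Type*} [NormedAddCommGroup H] [InnerProductSpace ℝ H] {ψ : ℝ × ℝ → H}

theorem radial_oscillator_inequality (hψ : ContDiff ℝ 1 ψ) (hc : HasCompactSupport ψ)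
    (hpos : ∀ p ∈ tsupport ψ, 0 < p.1) (ω ν : ℝ) :
    2 * ω * (1 + ν) * ∫ p, p.1 * ‖ψ p‖ ^ 2 ≤
      (∫ p, p.1 * ‖fderiv ℝ ψ p (1, 0)‖ ^ 2) + ν ^ 2 * (∫ p, p.1⁻¹ * ‖ψ p‖ ^ 2)
        + ω ^ 2 * ∫ p, p.1 ^ 3 * ‖ψ p‖ ^ 2 := by
  have hinv : ContinuousOn (fun p : ℝ × ℝ => p.1⁻¹) (tsupport ψ) :=
    continuousOn_fst.inv₀ fun p hp => (hpos p hp).ne'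
  have riccati_bound : ∫ p, (2 * ω * (1 + ν) * p.1 - ν ^ 2 * p.1⁻¹ - ω ^ 2 * p.1 ^ 3) * ‖ψ p‖ ^ 2 ≤
      ∫ p, p.1 * ‖fderiv ℝ ψ p (1, 0)‖ ^ 2 := by
    -- `w = ρ ∂u / u` for `u = ρ ^ ν * exp (-ω ρ² / 2)`
    refine integral_mul_norm_sq_le_of_riccati (w := fun p => ν - ω * p.1 ^ 2) hψ hc
      continuousOn_fst hpos (by fun_prop) (by fun_prop)
      fun p hp => hasLineDerivAt_one_zero_of_hasDerivAt ?_
    refine ((hasDerivAt_pow 2 p.1).const_mul ω |>.const_sub ν).congr_deriv ?_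
    have hp_ne := (hpos p hp).ne'
    field_simp
    ring
  have integrable_mass := (integrable_mul_norm_sq (μ := volume) hψ.continuous hc
    continuousOn_fst).const_mul (2 * ω * (1 + ν))
  have integrable_centrifugal := (integrable_mul_norm_sq (μ := volume) hψ.continuous hc
    hinv).const_mul (ν ^ 2)
  have integrable_confining := (integrable_mul_norm_sq (μ := volume) hψ.continuous hc
    (k := fun p => p.1 ^ 3) (by fun_prop)).const_mul (ω ^ 2)
  simp only [sub_mul, mul_assoc] at riccati_bound integrable_mass
  rw [integral_sub ?integrable_difference integrable_confining,
    integral_sub integrable_mass integrable_centrifugal] at riccati_bound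
  case integrable_difference => exact integrable_mass.sub integrable_centrifugal
  simp only [integral_const_mul] at riccati_bound
  linarith

theorem sin_pi_div_mul_pos {θ t : ℝ} (ht : t ∈ Ioo 0 θ) : 0 < sin (π / θ * t) := by
  have hθ : 0 < θ := ht.1.trans ht.2
  have ht0 := ht.1
  refine sin_pos_of_pos_of_lt_pi (by positivity) ?_
  calc π / θ * t < π / θ * θ := by gcongr; exact ht.2
    _ = π := div_mul_cancel₀ π hθ.ne'

theorem angular_poincare_inequality {θ : ℝ} {m : ℝ → ℝ} (hψ : ContDiff ℝ 1 ψ)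
    (hc : HasCompactSupport ψ) (hθ : ∀ p ∈ tsupport ψ, p.2 ∈ Ioo 0 θ)
    (hm : ContinuousOn (fun p : ℝ × ℝ => m p.1) (tsupport ψ))
    (hm_pos : ∀ p ∈ tsupport ψ, 0 < m p.1) :
    (π / θ) ^ 2 * ∫ p, m p.1 * ‖ψ p‖ ^ 2 ≤ ∫ p, m p.1 * ‖fderiv ℝ ψ p (0, 1)‖ ^ 2 := by
  simp only [← integral_const_mul, ← mul_assoc]
  set ν := π / θ
  have hsin : ∀ p ∈ tsupport ψ, sin (ν * p.2) ≠ 0 := fun p hp => (sin_pi_div_mul_pos (hθ p hp)).ne'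
  have hcot : ContinuousOn (fun p : ℝ × ℝ => cot (ν * p.2)) (tsupport ψ) := fun p hp =>
    ContinuousAt.continuousWithinAt <| ContinuousAt.comp (f := fun p : ℝ × ℝ => ν * p.2)
      (hasDerivAt_cot (hsin p hp)).continuousAt (by fun_prop)
  -- `w = m ∂u / u` for `u = sin (ν φ)`
  refine integral_mul_norm_sq_le_of_riccati (w := fun p => m p.1 * (ν * cot (ν * p.2))) hψ hc hm
    hm_pos (hm.const_mul _) (hm.mul (hcot.const_mul ν))
    fun p hp => hasLineDerivAt_zero_one_of_hasDerivAt ?_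
  have deriv_cot : HasDerivAt (fun t => cot (ν * t)) (-(1 + cot (ν * p.2) ^ 2) * ν) p.2 :=
    (hasDerivAt_cot (hsin p hp)).comp p.2 (hasDerivAt_const_mul ν)
  refine ((deriv_cot.const_mul ν).const_mul (m p.1)).congr_deriv ?_
  have hm_ne := (hm_pos p hp).ne'
  field_simp

theorem setIntegral_oscillator_form_eq {U : Set (ℝ × ℝ)} (hψ : ContDiff ℝ 1 ψ)
    (hc : HasCompactSupport ψ) (hs : tsupport ψ ⊆ U) (hpos : ∀ p ∈ tsupport ψ, 0 < p.1) (ω : ℝ) :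
    ∫ p in U, (‖fderiv ℝ ψ p (1, 0)‖ ^ 2 + ‖fderiv ℝ ψ p (0, 1)‖ ^ 2 / p.1 ^ 2
        + ω ^ 2 * p.1 ^ 2 * ‖ψ p‖ ^ 2) * p.1 =
      (∫ p, p.1 * ‖fderiv ℝ ψ p (1, 0)‖ ^ 2) + (∫ p, p.1⁻¹ * ‖fderiv ℝ ψ p (0, 1)‖ ^ 2)
        + ω ^ 2 * ∫ p, p.1 ^ 3 * ‖ψ p‖ ^ 2 := by
  have integrable_radial := integrable_mul_norm_fderiv_sq (μ := volume) hψ hc (1, 0)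
    continuousOn_fst
  have integrable_angular := integrable_mul_norm_fderiv_sq (μ := volume) hψ hc (0, 1)
    (k := fun p => p.1⁻¹) (continuousOn_fst.inv₀ fun p hp => (hpos p hp).ne')
  have integrable_confining := (integrable_mul_norm_sq (μ := volume) hψ.continuous hc
    (k := fun p => p.1 ^ 3) (by fun_prop)).const_mul (ω ^ 2)
  rw [setIntegral_eq_integral_of_forall_compl_eq_zero fun p hp => ?vanishing,
    ← integral_const_mul, ← integral_add integrable_radial integrable_angular,
    ← integral_add ?integrable_kinetic integrable_confining]
  case integrable_kinetic => exact integrable_radial.add integrable_angular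
  case vanishing =>
    have hp' : p ∉ tsupport ψ := fun h => hp (hs h)
    simp [image_eq_zero_of_notMem_tsupport hp', fderiv_of_notMem_tsupport (𝕜 := ℝ) hp']
  refine integral_congr_ae (.of_forall fun p => ?_)
  rcases eq_or_ne p.1 0 with h | h
  · simp [h]
  · field_simp

theorem oscillator_form_lower_bound_general {a : ℝ} (ω : ℝ) (hψ : ContDiff ℝ 1 ψ)
    (hc : HasCompactSupport ψ) (hs : tsupport ψ ⊆ wedgeU a) :
    2 * ω * (1 + 1 / (2 * a)) * ∫ p in wedgeU a, ‖ψ p‖ ^ 2 * p.1 ≤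
      ∫ p in wedgeU a, (‖fderiv ℝ ψ p (1, 0)‖ ^ 2 + ‖fderiv ℝ ψ p (0, 1)‖ ^ 2 / p.1 ^ 2
        + ω ^ 2 * p.1 ^ 2 * ‖ψ p‖ ^ 2) * p.1 := by
  have hpos : ∀ p ∈ tsupport ψ, 0 < p.1 := fun p hp => (hs hp).1
  have mass_eq : ∫ p in wedgeU a, ‖ψ p‖ ^ 2 * p.1 = ∫ p, p.1 * ‖ψ p‖ ^ 2 := by
    simp only [mul_comm (‖ψ _‖ ^ 2)]
    refine setIntegral_eq_integral_of_forall_compl_eq_zero fun p hp => ?_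
    simp [image_eq_zero_of_notMem_tsupport fun h => hp (hs h)]
  have radial := radial_oscillator_inequality hψ hc hpos ω (1 / (2 * a))
  have angular := angular_poincare_inequality (m := fun r => r⁻¹) hψ hc (fun p hp => (hs hp).2)
    (continuousOn_fst.inv₀ fun p hp => (hpos p hp).ne') fun p hp => inv_pos.2 (hpos p hp)
  have angular_frequency : π / (2 * π * a) = 1 / (2 * a) := by field_simp
  rw [angular_frequency] at angular
  rw [mass_eq, setIntegral_oscillator_form_eq hψ hc hs hpos]
  linarith

end PolarCoordinates

/-- **Spectral lower bound for the harmonic-oscillator-type form `l`.**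
For `a ∈ (0,1]` and every `φ ∈ C¹_c(U)`,
`∫_U [ |∂_ρφ|² + |∂_φφ|²/ρ² + (ρ²/16)φ² ] ρ dρ dφ ≥ (1/2 + 1/(4a)) ∫_U φ² ρ dρ dφ`. -/
theorem oscillator_form_lower_bound
    (a : ℝ) (ha : a ∈ Ioc (0:ℝ) 1) :
    ∀ ψ : ℝ × ℝ → ℝ,
      ContDiff ℝ 1 ψ → HasCompactSupport ψ → tsupport ψ ⊆ wedgeU a →
      (∫ p in wedgeU a,
          ((fderiv ℝ ψ p (1, 0)) ^ 2 + (fderiv ℝ ψ p (0, 1)) ^ 2 / p.1 ^ 2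
            + p.1 ^ 2 / 16 * (ψ p) ^ 2) * p.1)
        ≥ (1 / 2 + 1 / (4 * a)) * ∫ p in wedgeU a, (ψ p) ^ 2 * p.1 := by
  intro ψ hψ hc hs
  have coefficient : 1 / 2 + 1 / (4 * a) = 2 * (1 / 4) * (1 + 1 / (2 * a)) := by ring
  have potential (r : ℝ) : r ^ 2 / 16 = (1 / 4) ^ 2 * r ^ 2 := by ring
  simpa only [coefficient, potential, Real.norm_eq_abs, sq_abs] using
    oscillator_form_lower_bound_general (1 / 4) hψ hc hs
end
end

section
/- Let a ∈ (0,1], set μ := 1/(2a), and define u : (0,∞) × (0,∞) × (0,2πa) → ℝ by u(t,r,φ) := (1+t)^{−(1+μ)} r^μ e^{−r²/(4(1+t))} sin(μφ). Then u satisfies the heat equation in polar coordinates: for all t > 0, r > 0, φ ∈ (0,2πa), ∂_t u(t,r,φ) = ∂_r² u(t,r,φ) + (1/r) ∂_r u(t,r,φ) + (1/r²) ∂_φ² u(t,r,φ); moreover u(t,r,φ) → 0 as φ → 0 and as φ → 2πa. -/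
open MeasureTheory Real Set Filter

noncomputable section

/-!
Separating variables, `u` is a radial profile in `(1 + t, r)` times the angular mode `sin (μ φ)`,
which is an eigenfunction of `∂_φ²` with eigenvalue `-μ²`. Both first-order derivatives of the
profile `K` are multiples of `K`, say `∂_s K = A K` and `∂_r K = B K`, so the radial equation
reduces to the Riccati-type identity `A = B' + B² + B / r - μ² / r²` between rational functions.
The angular mode vanishes on the edges of the wedge because `μ · 2πa = π`.
-/

/-- The radial profile `s^{-(1+μ)} r^μ e^{-r²/(4s)}` of the self-similar heat solution of angular
frequency `μ`, where `s` is the time shifted so that the singularity sits at `s = 0`. -/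
def radialHeatProfile (μ s r : ℝ) : ℝ :=
  s ^ (-(1 + μ)) * r ^ μ * exp (-r ^ 2 / (4 * s))

section RadialHeatProfile

variable {μ s r : ℝ}

theorem hasDerivAt_radialHeatProfile_time (hs : s ≠ 0) :
    HasDerivAt (fun s' => radialHeatProfile μ s' r)
      ((r ^ 2 / (4 * s ^ 2) - (1 + μ) / s) * radialHeatProfile μ s r) s := by
  have hpow : HasDerivAt (fun s' : ℝ => s' ^ (-(1 + μ))) (-(1 + μ) * (s ^ (-(1 + μ)) / s)) s := by
    simpa only [rpow_sub_one hs] using hasDerivAt_rpow_const (p := -(1 + μ)) (Or.inl hs)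
  have hexponent : HasDerivAt (fun s' : ℝ => -r ^ 2 / (4 * s')) (r ^ 2 / (4 * s ^ 2)) s := by
    have hquot (s' : ℝ) : -r ^ 2 / (4 * s') = -r ^ 2 / 4 * s'⁻¹ := by ring
    simp only [hquot]
    exact ((hasDerivAt_inv hs).const_mul (-r ^ 2 / 4)).congr_deriv (by ring)
  refine ((hpow.mul_const (r ^ μ)).mul hexponent.exp).congr_deriv ?_
  rw [radialHeatProfile]
  ring

theorem hasDerivAt_radialHeatProfile_radius (hr : r ≠ 0) :
    HasDerivAt (radialHeatProfile μ s)
      ((μ / r - r / (2 * s)) * radialHeatProfile μ s r) r := by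
  have hpow : HasDerivAt (fun r' : ℝ => r' ^ μ) (μ * (r ^ μ / r)) r := by
    simpa only [rpow_sub_one hr] using hasDerivAt_rpow_const (p := μ) (Or.inl hr)
  have hexponent : HasDerivAt (fun r' : ℝ => -r' ^ 2 / (4 * s)) (-(r / (2 * s))) r :=
    ((hasDerivAt_pow 2 r).neg.div_const (4 * s)).congr_deriv (by ring)
  refine ((hpow.const_mul (s ^ (-(1 + μ)))).mul hexponent.exp).congr_deriv ?_
  rw [radialHeatProfile]
  ring

theorem hasDerivAt_deriv_radialHeatProfile (hr : r ≠ 0) :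
    HasDerivAt (deriv (radialHeatProfile μ s))
      ((-μ / r ^ 2 - 1 / (2 * s) + (μ / r - r / (2 * s)) ^ 2) * radialHeatProfile μ s r) r := by
  have hfactor : HasDerivAt (fun r' : ℝ => μ / r' - r' / (2 * s))
      (-μ / r ^ 2 - 1 / (2 * s)) r :=
    (((hasDerivAt_inv hr).const_mul μ).sub ((hasDerivAt_id r).div_const (2 * s))).congr_deriv
      (by ring)
  have hderiv : deriv (radialHeatProfile μ s) =ᶠ[nhds r]
      fun r' => (μ / r' - r' / (2 * s)) * radialHeatProfile μ s r' := by
    filter_upwards [isOpen_ne.mem_nhds hr] with r' hr'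
    exact (hasDerivAt_radialHeatProfile_radius hr').deriv
  exact ((hfactor.mul (hasDerivAt_radialHeatProfile_radius hr)).congr_deriv
    (by ring)).congr_of_eventuallyEq hderiv

theorem radialHeatProfile_heat_equation (hs : s ≠ 0) (hr : r ≠ 0) :
    deriv (fun s' => radialHeatProfile μ s' r) s
      = deriv (deriv (radialHeatProfile μ s)) r + (1 / r) * deriv (radialHeatProfile μ s) r
        - μ ^ 2 / r ^ 2 * radialHeatProfile μ s r := by
  rw [(hasDerivAt_radialHeatProfile_time hs).deriv, (hasDerivAt_deriv_radialHeatProfile hr).deriv,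
    (hasDerivAt_radialHeatProfile_radius hr).deriv]
  field_simp
  ring

end RadialHeatProfile

theorem deriv_deriv_sin_const_mul (μ φ : ℝ) :
    deriv (fun q => deriv (fun q' => sin (μ * q')) q) φ = -μ ^ 2 * sin (μ * φ) := by
  have hmul (q : ℝ) : HasDerivAt (fun q' => μ * q') μ q := hasDerivAt_const_mul μ
  have hderiv (q : ℝ) : deriv (fun q' => sin (μ * q')) q = cos (μ * q) * μ := (hmul q).sin.deriv
  simp only [hderiv]
  rw [((hmul φ).cos.mul_const μ).deriv]
  ring

theorem polar_heat_equation_mul_sin {v : ℝ → ℝ → ℝ} {μ t r : ℝ}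
    (hv : deriv (fun t' => v t' r) t
      = deriv (deriv (v t)) r + (1 / r) * deriv (v t) r - μ ^ 2 / r ^ 2 * v t r) (φ : ℝ) :
    deriv (fun t' => v t' r * sin (μ * φ)) t
      = deriv (fun r' => deriv (fun r'' => v t r'' * sin (μ * φ)) r') r
        + (1 / r) * deriv (fun r' => v t r' * sin (μ * φ)) r
        + (1 / r ^ 2) * deriv (fun q => deriv (fun q' => v t r * sin (μ * q')) q) φ := by
  simp only [deriv_mul_const_field, deriv_const_mul_field, deriv_deriv_sin_const_mul, hv]
  ring

theorem self_similar_heat_solution_general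
    (a : ℝ) (ha : a ≠ 0)
    (μ : ℝ) (hμ : μ = 1 / (2 * a))
    (u : ℝ → ℝ → ℝ → ℝ)
    (hu : ∀ t r φ, u t r φ
      = (1 + t) ^ (-(1 + μ)) * r ^ μ * Real.exp (-r ^ 2 / (4 * (1 + t)))
          * Real.sin (μ * φ)) :
    ∀ t ∈ Ioi (-1 : ℝ), ∀ r ∈ Ioi (0 : ℝ),
      (∀ φ, deriv (fun t' => u t' r φ) t
        = deriv (fun r' => deriv (fun r'' => u t r'' φ) r') r
          + (1 / r) * deriv (fun r' => u t r' φ) r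
          + (1 / r ^ 2) * deriv (fun q => deriv (fun q' => u t r q') q) φ)
      ∧ Tendsto (u t r) (nhds 0) (nhds 0)
      ∧ Tendsto (u t r) (nhds (2 * π * a)) (nhds 0) := by
  intro t ht r hr
  have hs : 1 + t ≠ 0 := (neg_lt_iff_pos_add'.mp ht).ne'
  have hsep (t r φ : ℝ) : u t r φ = radialHeatProfile μ (1 + t) r * sin (μ * φ) := hu t r φ
  have hcont : Continuous (u t r) := by
    simp only [funext (hsep t r)]
    fun_prop
  have hedge : μ * (2 * π * a) = π := by
    rw [hμ]
    field_simp
  refine ⟨fun φ => ?_, hcont.tendsto' 0 0 ?_, hcont.tendsto' (2 * π * a) 0 ?_⟩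
  · simp only [hsep]
    refine polar_heat_equation_mul_sin (v := fun t' => radialHeatProfile μ (1 + t')) ?_ φ
    rw [deriv_comp_const_add (fun s => radialHeatProfile μ s r)]
    exact radialHeatProfile_heat_equation hs hr.ne'
  · rw [hsep, mul_zero, sin_zero, mul_zero]
  · rw [hsep, hedge, sin_pi, mul_zero]

/-- **The explicit self-similar solution of the heat equation in a straight wedge.**
For `a ∈ (0,1]` and `μ = 1/(2a)`, the function
`u(t,r,φ) = (1+t)^{-(1+μ)} r^μ e^{-r²/(4(1+t))} sin(μφ)` satisfies the heat equation
`∂_t u = ∂_r² u + (1/r)∂_r u + (1/r²)∂_φ² u` in polar coordinates on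
`(0,∞) × (0,∞) × (0,2πa)`, and vanishes in the limits `φ → 0` and `φ → 2πa`. -/
theorem self_similar_heat_solution
    (a : ℝ) (ha : a ∈ Ioc (0:ℝ) 1)
    (μ : ℝ) (hμ : μ = 1 / (2 * a))
    (u : ℝ → ℝ → ℝ → ℝ)
    (hu : ∀ t r φ, u t r φ
      = (1 + t) ^ (-(1 + μ)) * r ^ μ * Real.exp (-r ^ 2 / (4 * (1 + t)))
          * Real.sin (μ * φ)) :
    ∀ t ∈ Ioi (0:ℝ), ∀ r ∈ Ioi (0:ℝ), ∀ φ ∈ Ioo (0:ℝ) (2 * π * a),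
      (deriv (fun t' => u t' r φ) t
        = deriv (fun r' => deriv (fun r'' => u t r'' φ) r') r
          + (1 / r) * deriv (fun r' => u t r' φ) r
          + (1 / r ^ 2) * deriv (fun q => deriv (fun q' => u t r q') q) φ)
      ∧ Tendsto (fun q => u t r q) (nhdsWithin 0 (Ioo (0:ℝ) (2 * π * a))) (nhds 0)
      ∧ Tendsto (fun q => u t r q) (nhdsWithin (2 * π * a) (Ioo (0:ℝ) (2 * π * a)))
          (nhds 0) := by
  intro t ht r hr φ _
  obtain ⟨heat, hzero, hedge⟩ := self_similar_heat_solution_general a ha.1.ne' μ hμ u hu t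
    (Ioi_subset_Ioi neg_one_lt_zero.le ht) r hr
  exact ⟨heat φ, hzero.mono_left nhdsWithin_le_nhds, hedge.mono_left nhdsWithin_le_nhds⟩
end
end

section
/- Let a ∈ (0,1] and let θ ∈ C¹((0,∞)) with r ↦ r θ'(r) bounded on (0,∞) and with the support of θ' compact in ℝ. Then for every fixed v ∈ C¹_c(U), lim_{s→∞} ∫_U ρ² e^{s} θ'(e^{s/2} ρ)² |∂_ρ v(ρ,φ)|² ρ dρ dφ = 0. -/
/-!
Put `g(r) = (r θ'(r))²`. Since `ρ² e^s = (e^{s/2} ρ)²`, the integrand is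
`g(e^{s/2} ρ) · |∂_ρ v|² ρ`. The function `g` is bounded on `(0,∞)` and vanishes at infinity, so the
integrand tends to `0` at every point with `ρ > 0` and is dominated by a multiple of the integrable
function `|∂_ρ v|² ρ`; dominated convergence applies.
-/

open MeasureTheory Real Set Filter

noncomputable section

theorem tendsto_integral_comp_mul_smul_zero
    {X 𝕜 E : Type*} [MeasurableSpace X] {μ : Measure X} [NormedField 𝕜]
    [NormedAddCommGroup E] [NormedSpace ℝ E] [NormedSpace 𝕜 E]
    {g : ℝ → 𝕜} {C : ℝ} {ρ : X → ℝ} {w : X → E}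
    (hg_meas : StronglyMeasurable g) (hg_bound : ∀ r, 0 < r → ‖g r‖ ≤ C)
    (hg_lim : Tendsto g atTop (nhds 0))
    (hρ_meas : AEMeasurable ρ μ) (hρ_pos : ∀ᵐ x ∂μ, 0 < ρ x) (hw : Integrable w μ) :
    Tendsto (fun c : ℝ => ∫ x, g (c * ρ x) • w x ∂μ) atTop (nhds 0) := by
  rw [← integral_zero X E]
  refine tendsto_integral_filter_of_dominated_convergence (fun x => C * ‖w x‖) ?meas ?bound
    (hw.norm.const_mul C) ?lim
  case meas =>
    exact .of_forall fun c =>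
      (hg_meas.aestronglyMeasurable.comp_aemeasurable (hρ_meas.const_mul c)).smul
        hw.aestronglyMeasurable
  case bound =>
    filter_upwards [eventually_gt_atTop 0] with c hc
    filter_upwards [hρ_pos] with x hx
    rw [norm_smul]
    gcongr
    exact hg_bound _ (mul_pos hc hx)
  case lim =>
    filter_upwards [hρ_pos] with x hx
    simpa using (hg_lim.comp (tendsto_id.atTop_mul_const hx)).smul_const (w x)

theorem integrable_fderiv_apply_sq_mul
    {E : Type*} [NormedAddCommGroup E] [NormedSpace ℝ E] [MeasurableSpace E]
    [OpensMeasurableSpace E] {μ : Measure E} [IsFiniteMeasureOnCompacts μ] {v w : E → ℝ}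
    (hv : ContDiff ℝ 1 v) (hvc : HasCompactSupport v) (hw : Continuous w) (e : E) :
    Integrable (fun p => (fderiv ℝ v p e) ^ 2 * w p) μ := by
  have hcont : Continuous fun p => fderiv ℝ v p e :=
    (hv.continuous_fderiv one_ne_zero).clm_apply continuous_const
  have hsupp : HasCompactSupport fun p => (fderiv ℝ v p e) ^ 2 :=
    (hvc.fderiv_apply (𝕜 := ℝ) e).comp_left (g := (· ^ 2)) (zero_pow two_ne_zero)
  exact ((hcont.pow 2).mul hw).integrable_of_hasCompactSupport hsupp.mul_right

/-- `f` plays the role of `∂_ρ v`, possibly a weak derivative. -/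
theorem twist_term_vanishes_general
    {Ω : Set (ℝ × ℝ)} (hΩ : MeasurableSet Ω) (hΩ_pos : ∀ p ∈ Ω, 0 < p.1)
    {θ θ' : ℝ → ℝ} (hderiv : ∀ r ∈ Ioi (0 : ℝ), HasDerivAt θ (θ' r) r)
    {B : ℝ} (hB : ∀ r ∈ Ioi (0 : ℝ), |r * θ' r| ≤ B)
    (hlim : Tendsto (fun r => r * θ' r) atTop (nhds 0))
    {f : ℝ × ℝ → ℝ} (hf : IntegrableOn (fun p => f p ^ 2 * p.1) Ω) :
    Tendsto
      (fun s : ℝ => ∫ p in Ω,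
        p.1 ^ 2 * Real.exp s * (θ' (Real.exp (s / 2) * p.1)) ^ 2 * f p ^ 2 * p.1)
      atTop (nhds 0) := by
  -- `deriv θ` is measurable on all of `ℝ`, whereas `θ'` is unconstrained on `(-∞, 0]`.
  let g : ℝ → ℝ := fun r => (r * deriv θ r) ^ 2
  have hg_eq : ∀ r, 0 < r → g r = (r * θ' r) ^ 2 := fun r hr => by
    simp only [g, (hderiv r hr).deriv]
  have hg_meas : Measurable g := (measurable_id.mul (measurable_deriv θ)).pow_const 2
  have hg_bound : ∀ r, 0 < r → ‖g r‖ ≤ B ^ 2 := fun r hr => by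
    rw [hg_eq r hr, norm_pow, Real.norm_eq_abs]
    exact pow_le_pow_left₀ (abs_nonneg _) (hB r hr) 2
  have hg_lim : Tendsto g atTop (nhds 0) := by
    have hsq : Tendsto (fun r => (r * θ' r) ^ 2) atTop (nhds 0) := by simpa using hlim.pow 2
    refine hsq.congr' ?_
    filter_upwards [eventually_gt_atTop 0] with r hr using (hg_eq r hr).symm
  have hscale : Tendsto (fun s : ℝ => Real.exp (s / 2)) atTop atTop :=
    Real.tendsto_exp_atTop.comp (tendsto_id.atTop_div_const two_pos)
  refine ((tendsto_integral_comp_mul_smul_zero hg_meas.stronglyMeasurable hg_bound hg_lim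
    measurable_fst.aemeasurable (ae_restrict_of_forall_mem hΩ hΩ_pos) hf).comp hscale).congr
    fun s => setIntegral_congr_fun hΩ fun p hp => ?_
  have hexp : Real.exp s = Real.exp (s / 2) ^ 2 := by
    rw [← Real.exp_nat_mul]; congr 1; push_cast; ring
  simp only [hg_eq _ (mul_pos (Real.exp_pos _) (hΩ_pos p hp)), smul_eq_mul, hexp]
  ring

/-- **Vanishing of the twist terms in the self-similar limit.**
If `r θ'(r)` is bounded on `(0,∞)` and `θ'` has compact support, then for every fixed
`v ∈ C¹_c(U)`,
`∫_U ρ² e^s θ'(e^{s/2}ρ)² |∂_ρv|² ρ dρ dφ → 0` as `s → ∞`. -/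
theorem twist_term_vanishes
    (a : ℝ) (ha : a ∈ Ioc (0:ℝ) 1)
    (θ θ' : ℝ → ℝ)
    (hderiv : ∀ r ∈ Ioi (0:ℝ), HasDerivAt θ (θ' r) r)
    (hcont : ContinuousOn θ' (Ioi 0))
    (B : ℝ) (hB : ∀ r ∈ Ioi (0:ℝ), |r * θ' r| ≤ B)
    (hsupp : HasCompactSupport θ')
    (v : ℝ × ℝ → ℝ)
    (hv : ContDiff ℝ 1 v) (hvc : HasCompactSupport v) (hvsupp : tsupport v ⊆ wedgeU a) :
    Tendsto
      (fun s : ℝ => ∫ p in wedgeU a,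
        p.1 ^ 2 * Real.exp s * (θ' (Real.exp (s / 2) * p.1)) ^ 2
          * (fderiv ℝ v p (1, 0)) ^ 2 * p.1)
      atTop (nhds 0) := by
  exact twist_term_vanishes_general (measurableSet_Ioi.prod measurableSet_Ioo) (fun _ hp => hp.1)
    hderiv hB (hsupp.mul_left.is_zero_at_infty.mono_left atTop_le_cocompact)
    (integrable_fderiv_apply_sq_mul hv hvc continuous_fst (1, 0)).integrableOn
end
end
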